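/- arXiv:2410.23899 — 2 statements merged into one kernel-verified Lean document; each statement's English description precedes it below -/
import Mathlib

section
/- (Lemma 4.3, modulus of continuity for several interlacing curves.) Fix p, ε, η, M^bot, M^side, A^sep, A^gap ∈ (0,∞), Δ^gap ∈ (0,1/2), k ∈ ℕ, and σ = √(p(1+p)). There exist N6 ∈ ℕ and δ > 0, depending on these parameters, such that the following holds for all integers n ≥ N6. Assume: x⃗, y⃗ ∈ 𝔚_k with |x_i| ≤ M^side·n^{1/2} and |y_i − p·n| ≤ M^side·n^{1/2} for i ∈ ⟦1,k⟧; x_i − x_{i+1} ≥ A^sep·n^{1/2} and y_i − y_{i+1} ≥ A^sep·n^{1/2} for i ∈ ⟦1,k−1⟧; g : ⟦0,n⟧ → [−∞,∞) with g(s) − p·s ≤ M^bot·n^{1/2} for all s ∈ ⟦0,n⟧; x_k ≥ g(s) − p·s + A^gap·n^{1/2} for all s ∈ ⟦0,n⟧ with s ≤ Δ^gap·n; y_k − p·n ≥ g(s) − p·s + A^gap·n^{1/2} for all s ∈ ⟦0,n⟧ with s ≥ n − Δ^gap·n; and Ω_Inter(0,n,x⃗,y⃗,∞,g) ≠ ∅.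 Let (Q_1,…,Q_k) be distributed according to the uniform probability measure on Ω_Inter(0,n,x⃗,y⃗,∞,g) and set 𝒬_i(t) = σ^{-1}·n^{-1/2}·(Q_i(t·n) − p·t·n) for t ∈ [0,1]. Then for each i ∈ ⟦1,k⟧: P( w(𝒬_i, δ) > ε ) < η. -/
open MeasureTheory Filter Topology ProbabilityTheory
open scoped ENNReal NNReal

/-- An increasing (integer) path on the integer interval `⟦T0, T1⟧`,
extended constantly to the rest of `ℤ`. -/
def IncrPath (T0 T1 : ℤ) (L : ℤ → ℤ) : Prop :=
  (∀ j : ℤ, T0 ≤ j → j < T1 → L j ≤ L (j + 1)) ∧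
  (∀ s : ℤ, s ≤ T0 → L s = L T0) ∧ (∀ s : ℤ, T1 ≤ s → L s = L T1)

/-- The set `Ω(T0,T1,x,y)` of increasing paths from `(T0,x)` to `(T1,y)`. -/
def OmegaPath (T0 T1 : ℤ) (x y : ℤ) : Set (ℤ → ℤ) :=
  {L | IncrPath T0 T1 L ∧ L T0 = x ∧ L T1 = y}

/-- Linear interpolation of a real-valued function defined on `ℤ`. -/
noncomputable def interp (f : ℤ → ℝ) (t : ℝ) : ℝ :=
  f ⌊t⌋ + (t - ⌊t⌋) * (f (⌊t⌋ + 1) - f ⌊t⌋)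

/-- Linear interpolation of an integer-valued function on `ℤ`. -/
noncomputable def interpZ (L : ℤ → ℤ) : ℝ → ℝ :=
  interp fun s => (L s : ℝ)

lemma interp_eq_on (f : ℤ → ℝ) (n : ℤ) :
    ∀ t ∈ Set.Icc (n : ℝ) ((n : ℝ) + 1),
      interp f t = f n + (t - n) * (f (n + 1) - f n) := by
  intro t ht
  rcases lt_or_eq_of_le ht.2 with h | h
  · have hfl : ⌊t⌋ = n := by
      rw [Int.floor_eq_iff]
      · exact ⟨ht.1, by exact_mod_cast h⟩
    simp [interp, hfl]
  · have hfl : ⌊t⌋ = n + 1 := by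
      rw [h, show ((n : ℝ) + 1) = ((n + 1 : ℤ) : ℝ) by push_cast; ring, Int.floor_intCast]
    rw [interp, hfl, h]
    push_cast
    ring

lemma continuous_interp (f : ℤ → ℝ) : Continuous (interp f) := by
  have hcov : (⋃ n : ℤ, Set.Icc (n : ℝ) ((n : ℝ) + 1)) = Set.univ := by
    ext t
    simp only [Set.mem_iUnion, Set.mem_univ, iff_true, Set.mem_Icc]
    exact ⟨⌊t⌋, Int.floor_le t, (Int.lt_floor_add_one t).le⟩
  have hlf : LocallyFinite fun n : ℤ => Set.Icc (n : ℝ) ((n : ℝ) + 1) := by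
    intro x
    refine ⟨Set.Ioo (x - 1) (x + 1), Ioo_mem_nhds (by linarith) (by linarith), ?_⟩
    apply Set.Finite.subset (Set.finite_Icc (⌊x⌋ - 2) (⌊x⌋ + 2))
    rintro n ⟨t, ht1, ht2⟩
    simp only [Set.mem_Icc] at ht1 ⊢
    simp only [Set.mem_Ioo] at ht2
    constructor
    · have h1 : ((⌊x⌋ - 2 : ℤ) : ℝ) < n := by
        push_cast
        have := Int.floor_le x
        linarith [ht1.2, ht2.1]
      exact_mod_cast h1.le
    · have h2 : (n : ℝ) < ((⌊x⌋ + 2 : ℤ) : ℝ) := by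
        push_cast
        have := Int.lt_floor_add_one x
        linarith [ht1.1, ht2.2]
      exact_mod_cast h2.le
  refine hlf.continuous hcov (fun n => isClosed_Icc) (fun n => ?_)
  have hc : ContinuousOn (fun t : ℝ => f n + (t - n) * (f (n + 1) - f n))
      (Set.Icc (n : ℝ) ((n : ℝ) + 1)) := (by continuity : Continuous _).continuousOn
  exact hc.congr (interp_eq_on f n)

/-- The set `Ω_Inter(T0,T1,x⃗,y⃗,f,g)` of `k`-tuples of increasing paths with prescribed
entrance and exit data, interlacing with each other and with the boundary functions
`f` (above) and `g` (below). -/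
def OmegaInter (T0 T1 : ℤ) {k : ℕ} (x y : Fin k → ℤ) (f g : ℤ → EReal) :
    Set (Fin k → ℤ → ℤ) :=
  {Q | (∀ i, IncrPath T0 T1 (Q i)) ∧ (∀ i, Q i T0 = x i) ∧ (∀ i, Q i T1 = y i) ∧
    ∀ r : ℤ, T0 < r → r ≤ T1 →
      (∀ i : Fin k, (i : ℕ) = 0 → ((Q i r : ℝ) : EReal) ≤ f (r - 1)) ∧
      (∀ i j : Fin k, (j : ℕ) = (i : ℕ) + 1 → Q j r ≤ Q i (r - 1)) ∧
      (∀ i : Fin k, (i : ℕ) = k - 1 → g r ≤ ((Q i (r - 1) : ℝ) : EReal))}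

/-- The random variable `X` is uniformly distributed on the (finite) set `S` under `P`. -/
def UniformOn {Ω E : Type*} [MeasurableSpace Ω] (P : Measure Ω) (X : Ω → E)
    (S : Set E) : Prop :=
  (∀ ω, X ω ∈ S) ∧ ∀ Q ∈ S, P {ω | X ω = Q} = ((Nat.card S : ℝ≥0∞))⁻¹

/-- The modulus of continuity `w(h, δ)` of `h` on `[a,b]`. -/
noncomputable def modCont (h : ℝ → ℝ) (a b δ : ℝ) : ℝ :=
  sSup {v : ℝ | ∃ s ∈ Set.Icc a b, ∃ t ∈ Set.Icc a b, |s - t| ≤ δ ∧ v = |h s - h t|}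

/-!
A uniform increasing path with given end points is a random walk with independent geometric
increments of mean `p`, conditioned on its final height. Flatness of the negative binomial weights
around their mode makes such a bridge comparable with the free walk away from its end, so by
Ottaviani's inequality a bridge oscillates by more than `ε * √n` on one of `R` blocks with a
probability that vanishes as `R` grows. Conversely a bridge follows a given curve within `a * √n`
with probability at least some `c > 0`. Curves which arch from `x i` to `y i` high above the floor
`g`, and stay ordered, thus provide a proportion `c ^ k` of interlacing tuples among all `k`-tuples
of paths. Passing from independent bridges to the interlacing ensemble therefore multiplies
probabilities by at most `c⁻¹ ^ k`, and it suffices to choose `R` accordingly.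
-/

section IndependentSums

variable {Ω ι : Type*}

lemma measurable_finset_sum_iSup_comap {X : ι → Ω → ℝ} {S : Set ι} {s : Finset ι}
    (hs : (s : Set ι) ⊆ S) :
    Measurable[⨆ i ∈ S, MeasurableSpace.comap (X i) inferInstance] fun ω => ∑ i ∈ s, X i ω :=
  Finset.measurable_sum s fun i hi =>
    (comap_measurable (X i)).mono
      (le_iSup₂ (f := fun i _ => MeasurableSpace.comap (X i) inferInstance) i (hs hi)) le_rfl

/-- The event that the partial sums of `X` leave `[-c, c]` for the first time at time `t`. -/
def firstExit (X : ℕ → Ω → ℝ) (c : ℝ) (t : ℕ) : Set Ω :=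
  {ω | c < |∑ i ∈ Finset.range t, X i ω|} ∩ ⋂ s ∈ Finset.range t,
    {ω | |∑ i ∈ Finset.range s, X i ω| ≤ c}

lemma measurableSet_firstExit_iSup_comap (X : ℕ → Ω → ℝ) (c : ℝ) (t : ℕ) :
    MeasurableSet[⨆ i ∈ Set.Iio t, MeasurableSpace.comap (X i) inferInstance]
      (firstExit X c t) := by
  let _ := ⨆ i ∈ Set.Iio t, MeasurableSpace.comap (X i) inferInstance
  have hsum (s : ℕ) (hst : s ≤ t) :
      Measurable fun ω => |∑ i ∈ Finset.range s, X i ω| := by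
    refine (measurable_finset_sum_iSup_comap fun i hi => ?_).abs
    exact (Finset.mem_range.mp hi).trans_le hst
  refine (measurableSet_lt measurable_const (hsum t le_rfl)).inter
    (Finset.measurableSet_biInter _ fun s hs => ?_)
  exact measurableSet_le (hsum s (Finset.mem_range.mp hs).le) measurable_const

lemma pairwise_disjoint_firstExit (X : ℕ → Ω → ℝ) (c : ℝ) :
    Pairwise (Function.onFun Disjoint (firstExit X c)) := by
  refine (pairwise_disjoint_on _).mpr fun s t hst => Set.disjoint_left.mpr ?_
  rintro ω ⟨hs : c < _, -⟩ ⟨-, ht⟩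
  exact (Set.mem_iInter₂.mp ht s (Finset.mem_range.mpr hst)).not_gt hs

lemma iUnion_firstExit (X : ℕ → Ω → ℝ) (c : ℝ) (N : ℕ) :
    ⋃ t ∈ Finset.range (N + 1), firstExit X c t =
      {ω | ∃ t ≤ N, c < |∑ i ∈ Finset.range t, X i ω|} := by
  classical
  ext ω
  simp only [Set.mem_iUnion, Finset.mem_range, Nat.lt_succ_iff, exists_prop]
  constructor
  · rintro ⟨t, ht, hω, -⟩
    exact ⟨t, ht, hω⟩
  · intro hex
    obtain ⟨hle, hlt⟩ := Nat.find_spec hex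
    refine ⟨Nat.find hex, hle, hlt, Set.mem_iInter₂.mpr fun s hs => ?_⟩
    have hs' := Finset.mem_range.mp hs
    exact not_lt.mp fun h => Nat.find_min hex hs' ⟨hs'.le.trans hle, h⟩

variable [MeasurableSpace Ω]

lemma measurableSet_firstExit {X : ℕ → Ω → ℝ} (hX : ∀ i, Measurable (X i)) (c : ℝ) (t : ℕ) :
    MeasurableSet (firstExit X c t) :=
  iSup₂_le (fun i _ => (hX i).comap_le) _ (measurableSet_firstExit_iSup_comap X c t)

variable {μ : Measure Ω} [IsProbabilityMeasure μ]

lemma measureReal_firstExit_inter_increment_le {X : ℕ → Ω → ℝ} (hX : ∀ i, Measurable (X i))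
    (hind : iIndepFun X μ) {N t : ℕ} {a : ℝ}
    (ha : μ.real {ω | a < |∑ i ∈ Finset.Ico t N, X i ω|} ≤ 1 / 2) (c : ℝ) :
    μ.real (firstExit X c t) ≤
      2 * μ.real (firstExit X c t ∩ {ω | |∑ i ∈ Finset.Ico t N, X i ω| ≤ a}) := by
  have hindep := indep_iSup_of_disjoint (fun i => (hX i).comap_le) hind.iIndep
    (Set.disjoint_left.mpr fun i (hi : i < t) (hi' : t ≤ i) => hi.not_ge hi')
  have hmeas : Measurable[⨆ i ∈ Set.Ici t, MeasurableSpace.comap (X i) inferInstance]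
      fun ω => |∑ i ∈ Finset.Ico t N, X i ω| :=
    continuous_abs.measurable.comp
      (measurable_finset_sum_iSup_comap fun i hi => (Finset.mem_Ico.mp hi).1)
  have hcompl : {ω | |∑ i ∈ Finset.Ico t N, X i ω| ≤ a} =
      {ω | a < |∑ i ∈ Finset.Ico t N, X i ω|}ᶜ := by ext; simp
  have hhalf : 1 / 2 ≤ μ.real {ω | |∑ i ∈ Finset.Ico t N, X i ω| ≤ a} := by
    rw [hcompl, probReal_compl_eq_one_sub]
    · linarith
    · exact measurableSet_lt measurable_const
        (Finset.measurable_sum _ fun i _ => hX i).abs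
  have hmul : μ.real (firstExit X c t ∩ {ω | |∑ i ∈ Finset.Ico t N, X i ω| ≤ a}) =
      μ.real (firstExit X c t) * μ.real {ω | |∑ i ∈ Finset.Ico t N, X i ω| ≤ a} := by
    have := (Indep_iff _ _ μ).mp hindep _ _ (measurableSet_firstExit_iSup_comap X c t)
      (hmeas (measurableSet_Iic (a := a)))
    rw [measureReal_def, measureReal_def, measureReal_def, ← ENNReal.toReal_mul]
    exact congrArg ENNReal.toReal this
  rw [hmul]
  nlinarith [measureReal_nonneg (μ := μ) (s := firstExit X c t)]

/-- Ottaviani's maximal inequality. -/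
theorem measureReal_exists_lt_abs_sum_le {X : ℕ → Ω → ℝ} (hX : ∀ i, Measurable (X i))
    (hind : iIndepFun X μ) {N : ℕ} {a : ℝ}
    (ha : ∀ t ≤ N, μ.real {ω | a < |∑ i ∈ Finset.Ico t N, X i ω|} ≤ 1 / 2) :
    μ.real {ω | ∃ t ≤ N, 2 * a < |∑ i ∈ Finset.range t, X i ω|} ≤
      2 * μ.real {ω | a < |∑ i ∈ Finset.range N, X i ω|} := by
  let stay (t : ℕ) : Set Ω := {ω | |∑ i ∈ Finset.Ico t N, X i ω| ≤ a}
  have hsum (s : Finset ℕ) : Measurable fun ω => |∑ i ∈ s, X i ω| :=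
    (Finset.measurable_sum _ fun i _ => hX i).abs
  have hsub : ⋃ t ∈ Finset.range (N + 1), firstExit X (2 * a) t ∩ stay t ⊆
      {ω | a < |∑ i ∈ Finset.range N, X i ω|} := by
    refine Set.iUnion₂_subset fun t ht ω hω => ?_
    obtain ⟨⟨hexit : 2 * a < _, -⟩, hstay : |_| ≤ a⟩ := hω
    have hadd := Finset.sum_range_add_sum_Ico (fun i => X i ω)
      (Nat.lt_succ_iff.mp (Finset.mem_range.mp ht))
    rw [Set.mem_ofPred_eq, ← hadd]
    have := abs_sub_abs_le_abs_sub (∑ i ∈ Finset.range t, X i ω)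
      (-∑ i ∈ Finset.Ico t N, X i ω)
    rw [abs_neg, sub_neg_eq_add] at this
    linarith
  calc μ.real {ω | ∃ t ≤ N, 2 * a < |∑ i ∈ Finset.range t, X i ω|}
      = ∑ t ∈ Finset.range (N + 1), μ.real (firstExit X (2 * a) t) := by
        rw [← iUnion_firstExit, measureReal_biUnion_finset
          (fun s _ t _ hst => pairwise_disjoint_firstExit X _ hst)
          fun t _ => measurableSet_firstExit hX _ t]
    _ ≤ ∑ t ∈ Finset.range (N + 1), 2 * μ.real (firstExit X (2 * a) t ∩ stay t) :=
        Finset.sum_le_sum fun t ht => measureReal_firstExit_inter_increment_le hX hind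
          (ha t (Nat.lt_succ_iff.mp (Finset.mem_range.mp ht))) _
    _ = 2 * μ.real (⋃ t ∈ Finset.range (N + 1), firstExit X (2 * a) t ∩ stay t) := by
        rw [← Finset.mul_sum, measureReal_biUnion_finset
          (fun s _ t _ hst => (pairwise_disjoint_firstExit X _ hst).mono
            Set.inter_subset_left Set.inter_subset_left)
          fun t _ => (measurableSet_firstExit hX _ t).inter
            (measurableSet_le (hsum _) measurable_const)]
    _ ≤ 2 * μ.real {ω | a < |∑ i ∈ Finset.range N, X i ω|} := by
        exact mul_le_mul_of_nonneg_left (measureReal_mono hsub) zero_le_two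

end IndependentSums

section SubexponentialTails

variable {Ω ι : Type*} [MeasurableSpace Ω] {μ : Measure Ω}

/-- Sub-exponential variables: the cumulant generating function is at most `C * θ ^ 2`, but, unlike
in `HasSubgaussianMGF`, only for parameters `|θ| ≤ θ₀`. -/
structure HasSubexponentialCGF (X : Ω → ℝ) (C : ℝ≥0) (θ₀ : ℝ) (μ : Measure Ω) : Prop where
  integrable_exp_mul : ∀ θ, |θ| ≤ θ₀ → Integrable (fun ω => Real.exp (θ * X ω)) μ
  cgf_le : ∀ θ, |θ| ≤ θ₀ → cgf X μ θ ≤ C * θ ^ 2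

namespace HasSubexponentialCGF

variable {X : Ω → ℝ} {C : ℝ≥0} {θ₀ θ a : ℝ}

lemma neg (hX : HasSubexponentialCGF X C θ₀ μ) : HasSubexponentialCGF (-X) C θ₀ μ where
  integrable_exp_mul θ hθ := by
    simpa using hX.integrable_exp_mul (-θ) (by rwa [abs_neg])
  cgf_le θ hθ := by
    simpa [cgf_neg] using hX.cgf_le (-θ) (by rwa [abs_neg])

lemma measureReal_lt_abs_le [IsFiniteMeasure μ] (hX : HasSubexponentialCGF X C θ₀ μ)
    (hθ : 0 ≤ θ) (hθ' : θ ≤ θ₀) :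
    μ.real {ω | a < |X ω|} ≤ 2 * Real.exp (-θ * a + C * θ ^ 2) := by
  have habs : |θ| ≤ θ₀ := by rwa [abs_of_nonneg hθ]
  have htail {Y : Ω → ℝ} (hY : HasSubexponentialCGF Y C θ₀ μ) :
      μ.real {ω | a ≤ Y ω} ≤ Real.exp (-θ * a + C * θ ^ 2) :=
    (measure_ge_le_exp_cgf a hθ (hY.integrable_exp_mul θ habs)).trans
      (Real.exp_le_exp.mpr (by gcongr; exact hY.cgf_le θ habs))
  have hsub : {ω | a < |X ω|} ⊆ {ω | a ≤ X ω} ∪ {ω | a ≤ (-X) ω} := fun ω (hω : a < |X ω|) =>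
    (lt_abs.mp hω).imp le_of_lt le_of_lt
  calc μ.real {ω | a < |X ω|} ≤ μ.real {ω | a ≤ X ω} + μ.real {ω | a ≤ (-X) ω} :=
        (measureReal_mono hsub).trans (measureReal_union_le _ _)
    _ ≤ 2 * Real.exp (-θ * a + C * θ ^ 2) := by linarith [htail hX, htail hX.neg]

lemma sum [IsFiniteMeasure μ] {X : ι → Ω → ℝ} (hmeas : ∀ i, Measurable (X i))
    (hind : iIndepFun X μ) (hX : ∀ i, HasSubexponentialCGF (X i) C θ₀ μ) (s : Finset ι) :
    HasSubexponentialCGF (∑ i ∈ s, X i) (s.card * C) θ₀ μ where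
  integrable_exp_mul θ hθ :=
    hind.integrable_exp_mul_sum hmeas fun i _ => (hX i).integrable_exp_mul θ hθ
  cgf_le θ hθ := by
    rw [hind.cgf_sum hmeas fun i _ => (hX i).integrable_exp_mul θ hθ]
    calc ∑ i ∈ s, cgf (X i) μ θ ≤ ∑ _i ∈ s, C * θ ^ 2 :=
          Finset.sum_le_sum fun i _ => (hX i).cgf_le θ hθ
      _ = ((s.card * C : ℝ≥0) : ℝ) * θ ^ 2 := by
          rw [Finset.sum_const, nsmul_eq_mul]; push_cast; ring

theorem measureReal_exists_lt_abs_sum_le [IsProbabilityMeasure μ] {X : ℕ → Ω → ℝ}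
    (hmeas : ∀ i, Measurable (X i)) (hind : iIndepFun X μ)
    (hX : ∀ i, HasSubexponentialCGF (X i) C θ₀ μ) (hθ : 0 ≤ θ) (hθ' : θ ≤ θ₀) (N : ℕ) :
    μ.real {ω | ∃ t ≤ N, 2 * a < |∑ i ∈ Finset.range t, X i ω|} ≤
      4 * Real.exp (-θ * a + C * N * θ ^ 2) := by
  have htail (s : Finset ℕ) (hs : s.card ≤ N) :
      μ.real {ω | a < |∑ i ∈ s, X i ω|} ≤ 2 * Real.exp (-θ * a + C * N * θ ^ 2) := by
    have h := (sum hmeas hind hX s).measureReal_lt_abs_le hθ hθ' (a := a)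
    simp only [Finset.sum_apply] at h
    refine h.trans ?_
    push_cast
    rw [mul_comm (s.card : ℝ) (C : ℝ)]
    gcongr
  rcases le_total (2 * Real.exp (-θ * a + C * N * θ ^ 2)) (1 / 2) with hsmall | hlarge
  · have hotta := _root_.measureReal_exists_lt_abs_sum_le hmeas hind (N := N) (a := a)
      fun t _ => (htail _ (by simp)).trans hsmall
    linarith [htail (Finset.range N) (by simp)]
  · exact measureReal_le_one.trans (by linarith)

end HasSubexponentialCGF

variable [IsProbabilityMeasure μ] {X : Ω → ℝ}

lemma cgf_isBigO_sq (h0 : 0 ∈ interior (integrableExpSet X μ)) (hmean : ∫ ω, X ω ∂μ = 0) :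
    cgf X μ =O[𝓝 0] fun θ => θ ^ 2 := by
  obtain ⟨series, hseries⟩ := analyticAt_cgf h0
  have hcoeff0 : series.coeff 0 = 0 := (hseries.coeff_zero _).trans cgf_zero
  have hcoeff1 : series.coeff 1 = 0 := by
    rw [FormalMultilinearSeries.coeff, Pi.one_def, ← hseries.deriv, deriv_cgf_zero h0, hmean,
      zero_div]
  have htaylor (θ : ℝ) : series.partialSum 2 θ = 0 := by
    simp [FormalMultilinearSeries.partialSum, Finset.sum_range_succ, hcoeff0, hcoeff1]
  simpa [htaylor] using hseries.isBigO_sub_partialSum_pow 2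

theorem exists_hasSubexponentialCGF (h0 : 0 ∈ interior (integrableExpSet X μ))
    (hmean : ∫ ω, X ω ∂μ = 0) : ∃ C : ℝ≥0, ∃ θ₀ > 0, HasSubexponentialCGF X C θ₀ μ := by
  obtain ⟨C, hC, hbound⟩ := (cgf_isBigO_sq h0 hmean).exists_nonneg
  obtain ⟨r, hr, hball⟩ := Metric.eventually_nhds_iff_ball.mp
    (hbound.bound.and (mem_interior_iff_mem_nhds.mp h0))
  have hmem {θ : ℝ} (hθ : |θ| ≤ r / 2) : θ ∈ Metric.ball (0 : ℝ) r := by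
    rw [mem_ball_zero_iff, Real.norm_eq_abs]; linarith
  refine ⟨⟨C, hC⟩, r / 2, half_pos hr, fun θ hθ => (hball θ (hmem hθ)).2, fun θ hθ => ?_⟩
  calc cgf X μ θ ≤ ‖cgf X μ θ‖ := Real.le_norm_self _
    _ ≤ C * ‖θ ^ 2‖ := (hball θ (hmem hθ)).1
    _ = C * θ ^ 2 := by rw [Real.norm_of_nonneg (sq_nonneg θ)]

end SubexponentialTails

lemma eventually_le_sqrt_natCast (c : ℝ) : ∀ᶠ n : ℕ in atTop, c ≤ √(n : ℝ) :=
  (Real.tendsto_sqrt_atTop.comp tendsto_natCast_atTop_atTop).eventually_ge_atTop c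

section NaturalsNear

/-- The natural numbers within distance `h` of the real number `c` (provided `0 ≤ c + h`). -/
noncomputable def natsNear (c h : ℝ) : Finset ℕ :=
  Finset.Icc ⌈c - h⌉₊ ⌊c + h⌋₊

variable {c h : ℝ}

lemma mem_natsNear (hch : 0 ≤ c + h) {l : ℕ} : l ∈ natsNear c h ↔ |(l : ℝ) - c| ≤ h := by
  rw [natsNear, Finset.mem_Icc, Nat.ceil_le, Nat.le_floor_iff hch, abs_sub_le_iff]
  constructor <;> rintro ⟨h₁, h₂⟩ <;> constructor <;> linarith

lemma card_natsNear_le (hch : 0 ≤ c + h) (hh : 0 ≤ h) : ((natsNear c h).card : ℝ) ≤ 2 * h + 1 := by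
  rw [natsNear, Nat.card_Icc]
  rcases le_total ⌈c - h⌉₊ (⌊c + h⌋₊ + 1) with hle | hle
  · rw [Nat.cast_sub hle]
    push_cast
    linarith [Nat.le_ceil (c - h), Nat.floor_le hch]
  · rw [Nat.sub_eq_zero_of_le hle]
    push_cast
    linarith

lemma le_card_natsNear (hc : 0 ≤ c) (hh : 1 ≤ h) : h ≤ ((natsNear c h).card : ℝ) := by
  have hfloor := Nat.lt_floor_add_one (c + h)
  have hsub : ((⌊c + h⌋₊ + 1 : ℕ) : ℝ) - (⌈c - h⌉₊ : ℕ) ≤ ((natsNear c h).card : ℝ) := by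
    rw [natsNear, Nat.card_Icc, sub_le_iff_le_add]
    exact_mod_cast le_tsub_add
  push_cast at hsub
  rcases le_total (c - h) 0 with hneg | hpos
  · rw [Nat.ceil_eq_zero.mpr hneg, Nat.cast_zero] at hsub
    linarith
  · linarith [Nat.ceil_lt_add_one hpos]

end NaturalsNear

section NegativeBinomial

/-- The negative binomial weights: the probability that `N` independent geometric variables of
mean `p` sum to `k`. -/
noncomputable def negBinWeight (p : ℝ) (N k : ℕ) : ℝ :=
  N.multichoose k * (p / (1 + p)) ^ k * (1 / (1 + p)) ^ N

variable {p : ℝ} {N k l : ℕ}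

lemma multichoose_succ_mul (N k : ℕ) :
    N.multichoose (k + 1) * (k + 1) = N.multichoose k * (N + k) := by
  rcases N with - | N
  · rcases k with - | k <;> simp
  · have := Nat.add_one_mul_choose_eq (N + k) k
    rw [Nat.multichoose_eq, Nat.multichoose_eq, show N + 1 + (k + 1) - 1 = N + k + 1 by lia,
      show N + 1 + k - 1 = N + k by lia, ← this]
    ring

lemma negBinWeight_nonneg (hp : 0 < p) : 0 ≤ negBinWeight p N k := by
  unfold negBinWeight; positivity

lemma negBinWeight_pos (hp : 0 < p) (hN : 0 < N) : 0 < negBinWeight p N k := by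
  have : 0 < N.multichoose k := by
    rw [Nat.multichoose_eq]; exact Nat.choose_pos (by lia)
  unfold negBinWeight; positivity

lemma negBinWeight_succ_mul (hp : 0 < p) (N k : ℕ) :
    negBinWeight p N (k + 1) * ((1 + p) * (k + 1)) = negBinWeight p N k * (p * (N + k)) := by
  have hchoose : (N.multichoose (k + 1) : ℝ) * (k + 1) = N.multichoose k * (N + k) := by
    exact_mod_cast multichoose_succ_mul N k
  have hone : 1 + p ≠ 0 := by positivity
  simp only [negBinWeight, pow_succ]
  calc _ = (N.multichoose (k + 1) * (k + 1) : ℝ) * (p / (1 + p)) ^ k * (1 / (1 + p)) ^ N *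
        (p / (1 + p) * (1 + p)) := by ring
    _ = _ := by rw [hchoose, div_mul_cancel₀ _ hone]; ring

lemma negBinWeight_le_succ (hp : 0 < p) (hk : k + (1 + p) ≤ p * N) :
    negBinWeight p N k ≤ negBinWeight p N (k + 1) := by
  refine le_of_mul_le_mul_right ?_ (show 0 < (1 + p) * ((k : ℝ) + 1) by positivity)
  rw [negBinWeight_succ_mul hp]
  exact mul_le_mul_of_nonneg_left (by linarith) (negBinWeight_nonneg hp)

lemma negBinWeight_succ_le (hp : 0 < p) (hk : p * N ≤ k + (1 + p)) :
    negBinWeight p N (k + 1) ≤ negBinWeight p N k := by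
  refine le_of_mul_le_mul_right ?_ (show 0 < (1 + p) * ((k : ℝ) + 1) by positivity)
  rw [negBinWeight_succ_mul hp]
  exact mul_le_mul_of_nonneg_left (by linarith) (negBinWeight_nonneg hp)

/-- The mode of the negative binomial weights `negBinWeight p N`. -/
noncomputable def negBinMode (p : ℝ) (N : ℕ) : ℕ :=
  ⌈p * N - (1 + p)⌉₊

lemma abs_negBinMode_sub_le (hp : 0 < p) (N : ℕ) : |(negBinMode p N : ℝ) - p * N| ≤ 1 + p := by
  have hpN : 0 ≤ p * N := by positivity
  rw [negBinMode, abs_le]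
  constructor
  · linarith [Nat.le_ceil (p * N - (1 + p))]
  · rcases le_total (p * N - (1 + p)) 0 with h | h
    · rw [Nat.ceil_eq_zero.mpr h, Nat.cast_zero]; linarith
    · linarith [Nat.ceil_lt_add_one h]

lemma negBinWeight_le_mode (hp : 0 < p) (N k : ℕ) :
    negBinWeight p N k ≤ negBinWeight p N (negBinMode p N) := by
  rcases le_total k (negBinMode p N) with hk | hk
  · refine Nat.decreasingInduction' (P := fun j => negBinWeight p N j ≤ _)
      (fun j hj _ ih => ?_) hk le_rfl
    have := Nat.lt_ceil.mp hj
    exact (negBinWeight_le_succ hp (by linarith)).trans ih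
  · induction k, hk using Nat.le_induction with
    | base => exact le_rfl
    | succ j hj ih =>
      have := Nat.ceil_le.mp hj
      exact (negBinWeight_succ_le hp (by linarith)).trans ih

lemma abs_log_sub_log_le {a b m : ℝ} (hm : 0 < m) (ha : m ≤ a) (hb : m ≤ b) :
    |Real.log a - Real.log b| ≤ |a - b| / m := by
  have hlog {x y : ℝ} (hx : m ≤ x) (hy : m ≤ y) : Real.log x - Real.log y ≤ |x - y| / m := by
    have hx0 := hm.trans_le hx
    have hy0 := hm.trans_le hy
    calc Real.log x - Real.log y = Real.log (x / y) := (Real.log_div hx0.ne' hy0.ne').symm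
      _ ≤ x / y - 1 := Real.log_le_sub_one_of_pos (by positivity)
      _ = (x - y) / y := by rw [sub_div, div_self hy0.ne']
      _ ≤ |x - y| / y := by gcongr; exact le_abs_self _
      _ ≤ |x - y| / m := by gcongr
  rw [abs_sub_le_iff]
  exact ⟨hlog ha hb, by rw [abs_sub_comm]; exact hlog hb ha⟩

lemma dist_log_negBinWeight_succ_le {K : ℝ} (hp : 0 < p) (hN : 1 + p ≤ √(N : ℝ))
    (hNK : 2 * K ≤ p * √(N : ℝ)) (hk : |(k : ℝ) - p * N| ≤ K * √(N : ℝ)) :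
    dist (Real.log (negBinWeight p N k)) (Real.log (negBinWeight p N (k + 1))) ≤
      2 * (K + 1) / (p * √(N : ℝ)) := by
  have hsqrt : 0 < √(N : ℝ) := by linarith
  have hsq : √(N : ℝ) * √(N : ℝ) = N := Real.mul_self_sqrt N.cast_nonneg
  have hN0 : 0 < N := Nat.cast_pos.mp (Real.sqrt_pos.mp hsqrt)
  obtain ⟨hlow, hupp⟩ := abs_le.mp hk
  have hhalf : p * N / 2 ≤ p * N - K * √(N : ℝ) := by nlinarith
  have hm : 0 < p * (N : ℝ) / 2 := by positivity
  have hup : p * (N : ℝ) / 2 ≤ p * (N + k) := by nlinarith [mul_nonneg hp.le k.cast_nonneg (α := ℝ)]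
  have hdown : p * (N : ℝ) / 2 ≤ (1 + p) * (k + 1) := by
    nlinarith [mul_nonneg hp.le k.cast_nonneg (α := ℝ)]
  have hlog := congrArg Real.log (negBinWeight_succ_mul hp N k)
  rw [Real.log_mul (negBinWeight_pos hp hN0).ne' (hm.trans_le hdown).ne',
    Real.log_mul (negBinWeight_pos hp hN0).ne' (hm.trans_le hup).ne'] at hlog
  calc dist (Real.log (negBinWeight p N k)) (Real.log (negBinWeight p N (k + 1)))
      = |Real.log ((1 + p) * (k + 1)) - Real.log (p * (N + k))| := by
        rw [Real.dist_eq]; congr 1; linarith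
    _ ≤ |(1 + p) * (k + 1) - p * (N + k)| / (p * N / 2) := abs_log_sub_log_le hm hdown hup
    _ ≤ ((K + 1) * √(N : ℝ)) / (p * N / 2) := by
        gcongr
        rw [abs_le]; constructor <;> linarith
    _ = 2 * (K + 1) / (p * √(N : ℝ)) := by
        rw [div_eq_div_iff hm.ne' (by positivity)]
        linear_combination (K + 1) * p * hsq

/-- The central window of the negative binomial weights is flat: one step changes the logarithm by
`O(1 / √N)` and the window has `O(√N)` points. -/
theorem exists_negBinWeight_le_mul (hp : 0 < p) {K : ℝ} (hK : 0 ≤ K) :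
    ∃ B > 0, ∀ᶠ N : ℕ in atTop, ∀ k l : ℕ, |(k : ℝ) - p * N| ≤ K * √(N : ℝ) →
      |(l : ℝ) - p * N| ≤ K * √(N : ℝ) → negBinWeight p N k ≤ B * negBinWeight p N l := by
  refine ⟨Real.exp (4 * K * (K + 1) / p), Real.exp_pos _, ?_⟩
  filter_upwards [eventually_le_sqrt_natCast (1 + p), eventually_le_sqrt_natCast (2 * K / p)]
    with N hN hNK
  rw [div_le_iff₀' hp] at hNK
  have hsqrt : 0 < √(N : ℝ) := by linarith
  have hN0 : 0 < N := Nat.cast_pos.mp (Real.sqrt_pos.mp hsqrt)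
  have hdist {k l : ℕ} (hkl : k ≤ l) (hk : |(k : ℝ) - p * N| ≤ K * √(N : ℝ))
      (hl : |(l : ℝ) - p * N| ≤ K * √(N : ℝ)) :
      dist (Real.log (negBinWeight p N k)) (Real.log (negBinWeight p N l)) ≤
        4 * K * (K + 1) / p := by
    obtain ⟨hk', -⟩ := abs_le.mp hk
    obtain ⟨-, hl'⟩ := abs_le.mp hl
    calc _ ≤ ∑ _j ∈ Finset.Ico k l, 2 * (K + 1) / (p * √(N : ℝ)) := by
          refine dist_le_Ico_sum_of_dist_le
            (f := fun j => Real.log (negBinWeight p N j)) hkl fun {j} hkj hjl => ?_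
          have hkj' : (k : ℝ) ≤ j := by exact_mod_cast hkj
          have hjl' : (j : ℝ) ≤ l := by exact_mod_cast hjl.le
          exact dist_log_negBinWeight_succ_le hp hN hNK
            (abs_le.mpr ⟨by linarith, by linarith⟩)
      _ = ((l : ℝ) - k) * (2 * (K + 1) / (p * √(N : ℝ))) := by
          rw [Finset.sum_const, Nat.card_Ico, nsmul_eq_mul, Nat.cast_sub hkl]
      _ ≤ (2 * K * √(N : ℝ)) * (2 * (K + 1) / (p * √(N : ℝ))) := by gcongr; linarith
      _ = 4 * K * (K + 1) / p := by field_simp; ring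
  intro k l hk hl
  have hlog : Real.log (negBinWeight p N k) - Real.log (negBinWeight p N l) ≤
      4 * K * (K + 1) / p := by
    refine (le_abs_self _).trans ?_
    rcases le_total k l with h | h
    · exact hdist h hk hl
    · rw [abs_sub_comm]; exact hdist h hl hk
  rw [← Real.log_le_log_iff (negBinWeight_pos hp hN0)
    (mul_pos (Real.exp_pos _) (negBinWeight_pos hp hN0)),
    Real.log_mul (Real.exp_pos _).ne' (negBinWeight_pos hp hN0).ne', Real.log_exp]
  linarith

end NegativeBinomial

section GeometricWalk

lemma sum_range_multichoose (N n : ℕ) :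
    ∑ k ∈ Finset.range (n + 1), N.multichoose k = (N + 1).multichoose n := by
  induction n with
  | zero => simp
  | succ n ih => rw [Finset.sum_range_succ, ih, Nat.multichoose_succ_succ, add_comm]

lemma card_piAntidiag {ι : Type*} [DecidableEq ι] (s : Finset ι) (n : ℕ) :
    (s.piAntidiag n).card = s.card.multichoose n := by
  induction s using Finset.cons_induction generalizing n with
  | empty => rcases n with - | n <;> simp
  | cons i s hi ih =>
    simp only [Finset.piAntidiag_cons hi, Finset.card_disjiUnion, Finset.card_map, ih]
    rw [Finset.Nat.sum_antidiagonal_eq_sum_range_succ_mk, Finset.card_cons,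
      ← sum_range_multichoose]
    exact Finset.sum_range_reflect (fun k => s.card.multichoose k) (n + 1)

/-- The success probability of the geometric distribution on `ℕ` of mean `p`; for `p < 0` it
takes the value `0` or `1`. -/
noncomputable def geometricParam (p : ℝ) : unitInterval :=
  Set.projIcc 0 1 zero_le_one (1 / (1 + p))

/-- The law of a sequence of independent geometric variables of mean `p`. Under this measure all
increasing integer paths with the same end points are equally likely, so that the partial sums
conditioned on their final value form a uniform path. -/
noncomputable def walkMeasure (p : ℝ) : Measure (ℕ → ℕ) :=
  Measure.infinitePi fun _ => geometricMeasure (geometricParam p)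

instance (p : ℝ) : IsProbabilityMeasure (walkMeasure p) := by
  unfold walkMeasure; infer_instance

variable {p : ℝ}

lemma coe_geometricParam (hp : 0 < p) : (geometricParam p : ℝ) = 1 / (1 + p) := by
  rw [geometricParam, Set.projIcc_of_mem]
  exact ⟨by positivity, (div_le_one (by linarith)).mpr (by linarith)⟩

lemma geometricParam_ne_zero (hp : 0 < p) : geometricParam p ≠ 0 := by
  intro h
  have hpos : (0 : ℝ) < 1 / (1 + p) := by positivity
  rw [← coe_geometricParam hp, h] at hpos
  exact lt_irrefl _ hpos

lemma exists_preimage_restrict_of_dependsOn {I : Finset ℕ} {A : Set (ℕ → ℕ)}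
    (hA : DependsOn (· ∈ A) (I : Set ℕ)) :
    ∃ A' : Set (I → ℕ), A = I.restrict ⁻¹' A' := by
  obtain ⟨g, hg⟩ := dependsOn_iff_exists_comp.mp hA
  exact ⟨{v | g v}, Set.ext fun ω => (congrFun hg ω).to_iff⟩

lemma measurableSet_of_dependsOn {I : Finset ℕ} {A : Set (ℕ → ℕ)}
    (hA : DependsOn (· ∈ A) (I : Set ℕ)) : MeasurableSet A := by
  obtain ⟨A', rfl⟩ := exists_preimage_restrict_of_dependsOn hA
  exact (Finset.measurable_restrict I) (.of_discrete)

lemma dependsOn_cylinder (J : Finset ℕ) (f : ℕ → ℕ) :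
    DependsOn (· ∈ {ω : ℕ → ℕ | ∀ i ∈ J, ω i = f i}) (J : Set ℕ) := fun ω ω' h =>
  propext (forall₂_congr fun i hi => by rw [h i hi])

lemma measureReal_inter_of_dependsOn {I J : Finset ℕ} {A B : Set (ℕ → ℕ)} (hIJ : Disjoint I J)
    (hA : DependsOn (· ∈ A) (I : Set ℕ)) (hB : DependsOn (· ∈ B) (J : Set ℕ)) :
    (walkMeasure p).real (A ∩ B) = (walkMeasure p).real A * (walkMeasure p).real B := by
  obtain ⟨A', rfl⟩ := exists_preimage_restrict_of_dependsOn hA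
  obtain ⟨B', rfl⟩ := exists_preimage_restrict_of_dependsOn hB
  have hind : iIndepFun (fun i (ω : ℕ → ℕ) => ω i) (walkMeasure p) :=
    iIndepFun_infinitePi (X := fun _ k => k) fun _ => measurable_id
  have h := (hind.indepFun_finset I J hIJ fun i => measurable_pi_apply i
    ).measure_inter_preimage_eq_mul A' B' .of_discrete .of_discrete
  rw [measureReal_def, measureReal_def, measureReal_def, ← ENNReal.toReal_mul]
  exact congrArg ENNReal.toReal h

lemma measureReal_geometricMeasure_singleton (hp : 0 < p) (k : ℕ) :
    (geometricMeasure (geometricParam p)).real {k} = (p / (1 + p)) ^ k * (1 / (1 + p)) := by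
  have hcompl : 1 - 1 / (1 + p) = p / (1 + p) := by field_simp; ring
  rw [geometricMeasure_real_singleton (geometricParam_ne_zero hp), coe_geometricParam hp, hcompl]

lemma measureReal_cylinder (hp : 0 < p) (J : Finset ℕ) (f : ℕ → ℕ) :
    (walkMeasure p).real {ω | ∀ i ∈ J, ω i = f i} =
      (p / (1 + p)) ^ (∑ i ∈ J, f i) * (1 / (1 + p)) ^ J.card := by
  have hpi : {ω : ℕ → ℕ | ∀ i ∈ J, ω i = f i} = (J : Set ℕ).pi fun i => {f i} := by
    ext; simp [Set.mem_pi]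
  rw [hpi, measureReal_def, walkMeasure, Measure.infinitePi_pi _ fun _ _ => .singleton _,
    ENNReal.toReal_prod]
  simp only [← measureReal_def, measureReal_geometricMeasure_singleton hp,
    Finset.prod_mul_distrib, Finset.prod_pow_eq_pow_sum, Finset.prod_const]

lemma measureReal_sum_eq (hp : 0 < p) (J : Finset ℕ) (k : ℕ) :
    (walkMeasure p).real {ω | ∑ i ∈ J, ω i = k} = negBinWeight p J.card k := by
  have hunion : {ω : ℕ → ℕ | ∑ i ∈ J, ω i = k} =
      ⋃ f ∈ J.piAntidiag k, {ω | ∀ i ∈ J, ω i = f i} := by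
    ext ω
    simp only [Set.mem_iUnion, Finset.mem_piAntidiag, exists_prop]
    constructor
    · intro (hω : ∑ i ∈ J, ω i = k)
      refine ⟨fun i => if i ∈ J then ω i else 0, ⟨?_, fun i hi => by simp_all⟩,
        fun i hi => (if_pos hi).symm⟩
      rw [← hω]
      exact Finset.sum_congr rfl fun i hi => if_pos hi
    · rintro ⟨f, ⟨hsum, -⟩, hω⟩
      exact (Finset.sum_congr rfl hω).trans hsum
  have hdisj : (J.piAntidiag k : Set (ℕ → ℕ)).PairwiseDisjoint
      fun f => {ω : ℕ → ℕ | ∀ i ∈ J, ω i = f i} := by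
    intro f hf g hg hfg
    rw [Finset.mem_coe, Finset.mem_piAntidiag] at hf hg
    refine Set.disjoint_left.mpr fun ω (hωf : ∀ i ∈ J, _) (hωg : ∀ i ∈ J, _) => hfg ?_
    ext i
    by_cases hi : i ∈ J
    · rw [← hωf i hi, hωg i hi]
    · rw [not_not.mp (mt (hf.2 i) hi), not_not.mp (mt (hg.2 i) hi)]
  rw [hunion, measureReal_biUnion_finset hdisj fun f _ => ?_]
  · rw [Finset.sum_congr rfl fun f hf => by
      rw [measureReal_cylinder hp, (Finset.mem_piAntidiag.mp hf).1]]
    rw [Finset.sum_const, card_piAntidiag, nsmul_eq_mul, negBinWeight, mul_assoc]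
  · exact measurableSet_of_dependsOn (dependsOn_cylinder J f)

end GeometricWalk

section PartialSums

variable {p : ℝ}

/-- The partial sum `ω 0 + ⋯ + ω (t - 1)`: the height of the walk with increments `ω`. -/
def partialSum (t : ℕ) (ω : ℕ → ℕ) : ℕ :=
  ∑ i ∈ Finset.range t, ω i

/-- The partial sum of `t` increments centered by its mean `p * t`. -/
noncomputable def centeredSum (p : ℝ) (t : ℕ) (ω : ℕ → ℕ) : ℝ :=
  partialSum t ω - p * t

/-- The increments from time `u` on. -/
def shift (u : ℕ) (ω : ℕ → ℕ) : ℕ → ℕ :=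
  fun i => ω (u + i)

lemma partialSum_add (u t : ℕ) (ω : ℕ → ℕ) :
    partialSum (u + t) ω = partialSum u ω + partialSum t (shift u ω) :=
  Finset.sum_range_add _ u t

lemma centeredSum_add (p : ℝ) (u t : ℕ) (ω : ℕ → ℕ) :
    centeredSum p (u + t) ω = centeredSum p u ω + centeredSum p t (shift u ω) := by
  simp only [centeredSum, partialSum_add]; push_cast; ring

lemma centeredSum_eq_sum (p : ℝ) (t : ℕ) (ω : ℕ → ℕ) :
    centeredSum p t ω = ∑ i ∈ Finset.range t, ((ω i : ℝ) - p) := by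
  simp [centeredSum, partialSum, mul_comm]

lemma partialSum_congr {t : ℕ} {ω ω' : ℕ → ℕ} (h : ∀ i < t, ω i = ω' i) :
    partialSum t ω = partialSum t ω' :=
  Finset.sum_congr rfl fun i hi => h i (Finset.mem_range.mp hi)

lemma measurable_partialSum (t : ℕ) : Measurable (partialSum t) :=
  Finset.measurable_sum _ fun i _ => measurable_pi_apply i

lemma measurePreserving_shift (u : ℕ) :
    MeasurePreserving (shift u) (walkMeasure p) (walkMeasure p) where
  measurable := measurable_pi_lambda _ fun i => measurable_pi_apply (u + i)
  map_eq := Measure.map_infinitePi_infinitePi_of_inj (add_right_injective u)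

lemma measureReal_preimage_shift (u : ℕ) {A : Set (ℕ → ℕ)} (hA : MeasurableSet A) :
    (walkMeasure p).real (shift u ⁻¹' A) = (walkMeasure p).real A :=
  congrArg ENNReal.toReal ((measurePreserving_shift u).measure_preimage hA.nullMeasurableSet)

lemma measureReal_partialSum_preimage (hp : 0 < p) (N k : ℕ) :
    (walkMeasure p).real (partialSum N ⁻¹' {k}) = negBinWeight p N k := by
  simpa [partialSum, Set.preimage] using measureReal_sum_eq hp (Finset.range N) k

lemma measureReal_partialSum_preimage_finset (hp : 0 < p) (N : ℕ) (s : Finset ℕ) :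
    (walkMeasure p).real (partialSum N ⁻¹' s) = ∑ k ∈ s, negBinWeight p N k := by
  simp only [← measureReal_partialSum_preimage hp]
  exact (sum_measureReal_preimage_singleton s fun k _ =>
    measurable_partialSum N (measurableSet_singleton k)).symm

lemma zero_mem_interior_integrableExpSet_geometricMeasure (hp : 0 < p) :
    0 ∈ interior (integrableExpSet (fun k : ℕ => (k : ℝ) - p)
      (geometricMeasure (geometricParam p))) := by
  have hr : p / (1 + p) < 1 := (div_lt_one (by linarith)).mpr (by linarith)
  have hcont : ContinuousAt (fun θ : ℝ => p / (1 + p) * Real.exp θ) 0 := by fun_prop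
  refine mem_interior_iff_mem_nhds.mpr
    ((hcont.eventually_lt continuousAt_const (by simpa using hr)).mono fun θ hθ => ?_)
  refine (integrable_geometricMeasure_iff (geometricParam_ne_zero hp)).mpr ?_
  refine ((summable_geometric_of_lt_one (by positivity) hθ).mul_right
    (1 / (1 + p) * Real.exp (-(θ * p)))).congr fun k => ?_
  rw [← geometricMeasure_real_singleton (geometricParam_ne_zero hp),
    measureReal_geometricMeasure_singleton hp, Real.norm_of_nonneg (Real.exp_nonneg _), mul_pow,
    ← Real.exp_nat_mul, mul_sub, sub_eq_add_neg, Real.exp_add, mul_comm θ k]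
  ring

lemma integral_sub_geometricMeasure (hp : 0 < p) :
    ∫ k : ℕ, ((k : ℝ) - p) ∂geometricMeasure (geometricParam p) = 0 := by
  have hr : ‖p / (1 + p)‖ < 1 := by
    rw [Real.norm_of_nonneg (by positivity), div_lt_one (by linarith)]; linarith
  have hintegrable : Integrable (fun k : ℕ => (k : ℝ) - p)
      (geometricMeasure (geometricParam p)) := by
    simpa using integrable_pow_of_mem_interior_integrableExpSet
      (zero_mem_interior_integrableExpSet_geometricMeasure hp) 1
  have hsum := hasSum_integral_geometricMeasure (geometricParam_ne_zero hp) hintegrable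
  simp only [← geometricMeasure_real_singleton (geometricParam_ne_zero hp),
    measureReal_geometricMeasure_singleton hp] at hsum
  have hzero := ((hasSum_coe_mul_geometric_of_norm_lt_one hr).sub
    ((hasSum_geometric_of_norm_lt_one hr).mul_left p)).mul_right (1 / (1 + p))
  have hcompl : 1 - p / (1 + p) = 1 / (1 + p) := by field_simp; ring
  have hvalue : (p / (1 + p) / (1 - p / (1 + p)) ^ 2 - p * (1 - p / (1 + p))⁻¹) *
      (1 / (1 + p)) = 0 := by
    rw [hcompl]; field_simp; ring
  rw [hvalue] at hzero
  have hfun := funext fun k : ℕ => show (k * (p / (1 + p)) ^ k - p * (p / (1 + p)) ^ k) *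
      (1 / (1 + p)) = ((p / (1 + p)) ^ k * (1 / (1 + p))) • ((k : ℝ) - p) by
    rw [smul_eq_mul]; ring
  exact hsum.unique (hfun ▸ hzero)

lemma HasSubexponentialCGF.comp_measurePreserving {Ω Ω' : Type*} [MeasurableSpace Ω]
    [MeasurableSpace Ω'] {μ : Measure Ω} {ν : Measure Ω'} {X : Ω' → ℝ} {C : ℝ≥0} {θ₀ : ℝ}
    (hX : HasSubexponentialCGF X C θ₀ ν) {f : Ω → Ω'} (hf : MeasurePreserving f μ ν) :
    HasSubexponentialCGF (X ∘ f) C θ₀ μ where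
  integrable_exp_mul θ hθ := hf.integrable_comp_of_integrable (hX.integrable_exp_mul θ hθ)
  cgf_le θ hθ := by
    rw [cgf, ← mgf_map hf.aemeasurable, hf.map_eq]
    · exact hX.cgf_le θ hθ
    · rw [hf.map_eq]; exact (hX.integrable_exp_mul θ hθ).aestronglyMeasurable

theorem exists_measureReal_exists_lt_abs_centeredSum_le (hp : 0 < p) :
    ∃ C : ℝ, 0 ≤ C ∧ ∃ θ₀ > 0, ∀ θ : ℝ, 0 ≤ θ → θ ≤ θ₀ → ∀ (N : ℕ) (a : ℝ),
      (walkMeasure p).real {ω | ∃ t ≤ N, a < |centeredSum p t ω|} ≤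
        4 * Real.exp (-θ * (a / 2) + C * N * θ ^ 2) := by
  obtain ⟨C, θ₀, hθ₀, hgeom⟩ := exists_hasSubexponentialCGF
    (zero_mem_interior_integrableExpSet_geometricMeasure hp) (integral_sub_geometricMeasure hp)
  have hind : iIndepFun (fun i (ω : ℕ → ℕ) => (ω i : ℝ) - p) (walkMeasure p) :=
    iIndepFun_infinitePi (X := fun _ (k : ℕ) => (k : ℝ) - p) fun _ => measurable_from_top
  refine ⟨C, C.2, θ₀, hθ₀, fun θ hθ hθ' N a => ?_⟩
  have h := HasSubexponentialCGF.measureReal_exists_lt_abs_sum_le (a := a / 2)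
    (X := fun i ω => (ω i : ℝ) - p) (μ := walkMeasure p)
    (fun i => (measurable_from_top (f := fun k : ℕ => (k : ℝ) - p)).comp (measurable_pi_apply i))
    hind (fun i => hgeom.comp_measurePreserving (measurePreserving_eval_infinitePi _ i)) hθ hθ' N
  simpa only [centeredSum_eq_sum, mul_div_cancel₀ a two_ne_zero] using h

end PartialSums

section LocalBounds

variable {p : ℝ}

lemma exists_eventually_measureReal_exists_sqrt_lt_abs_centeredSum_le (hp : 0 < p) {q : ℝ}
    (hq : 0 < q) :
    ∃ A : ℝ, 0 ≤ A ∧ ∀ᶠ N : ℕ in atTop,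
      (walkMeasure p).real {ω | ∃ t ≤ N, A * √(N : ℝ) < |centeredSum p t ω|} ≤ q := by
  obtain ⟨C, hC, θ₀, hθ₀, hmax⟩ := exists_measureReal_exists_lt_abs_centeredSum_le hp
  refine ⟨2 * (C + |Real.log (q / 4)|), by positivity, ?_⟩
  filter_upwards [eventually_le_sqrt_natCast (1 / θ₀)] with N hN
  have hsqrt : 0 < √(N : ℝ) := (by positivity : 0 < 1 / θ₀).trans_le hN
  have hsq : (N : ℝ) = √(N : ℝ) ^ 2 := (Real.sq_sqrt N.cast_nonneg).symm
  have hexp : -(1 / √(N : ℝ)) * (2 * (C + |Real.log (q / 4)|) * √(N : ℝ) / 2) +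
      C * N * (1 / √(N : ℝ)) ^ 2 = -|Real.log (q / 4)| := by
    rw [one_div_pow, ← hsq]
    have hN0 : (N : ℝ) ≠ 0 := (Real.sqrt_pos.mp hsqrt).ne'
    field_simp
    ring
  calc _ ≤ 4 * Real.exp (-(1 / √(N : ℝ)) * (2 * (C + |Real.log (q / 4)|) * √(N : ℝ) / 2) +
        C * N * (1 / √(N : ℝ)) ^ 2) :=
        hmax _ (by positivity) ((one_div_le hsqrt hθ₀).mpr hN) N _
    _ ≤ 4 * Real.exp (Real.log (q / 4)) := by
        rw [hexp]; gcongr; exact neg_abs_le _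
    _ = q := by rw [Real.exp_log (by positivity)]; ring

lemma exists_eventually_half_le_sum_negBinWeight (hp : 0 < p) :
    ∃ A : ℝ, 0 ≤ A ∧ ∀ᶠ N : ℕ in atTop,
      1 / 2 ≤ ∑ k ∈ natsNear (p * N) (A * √(N : ℝ)), negBinWeight p N k := by
  obtain ⟨A, hA, htail⟩ :=
    exists_eventually_measureReal_exists_sqrt_lt_abs_centeredSum_le hp one_half_pos
  refine ⟨A, hA, htail.mono fun N hN => ?_⟩
  rw [← measureReal_partialSum_preimage_finset hp]
  have hcompl := probReal_compl_eq_one_sub (μ := walkMeasure p)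
    (measurable_partialSum N (Finset.measurableSet (natsNear (p * N) (A * √(N : ℝ)))))
  have hsub : (partialSum N ⁻¹' (natsNear (p * N) (A * √(N : ℝ)) : Set ℕ))ᶜ ⊆
      {ω | ∃ t ≤ N, A * √(N : ℝ) < |centeredSum p t ω|} := fun ω hω =>
    ⟨N, le_rfl, not_le.mp fun h => hω ((mem_natsNear (by positivity)).mpr h)⟩
  linarith [measureReal_mono hsub (μ := walkMeasure p)]

theorem exists_eventually_div_sqrt_le_negBinWeight (hp : 0 < p) (K : ℝ) :
    ∃ c > 0, ∀ᶠ N : ℕ in atTop, ∀ k : ℕ, |(k : ℝ) - p * N| ≤ K * √(N : ℝ) →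
      c / √(N : ℝ) ≤ negBinWeight p N k := by
  obtain ⟨A, hA, hhalf⟩ := exists_eventually_half_le_sum_negBinWeight hp
  obtain ⟨B, hB, hflat⟩ := exists_negBinWeight_le_mul hp (le_max_of_le_right hA : 0 ≤ max K A)
  refine ⟨1 / (2 * (2 * A + 1) * B), by positivity, ?_⟩
  filter_upwards [hhalf, hflat, eventually_le_sqrt_natCast 1] with N hhalf hflat hN k hk
  have hsum : ∑ l ∈ natsNear (p * N) (A * √(N : ℝ)), negBinWeight p N l ≤
      (natsNear (p * N) (A * √(N : ℝ))).card * (B * negBinWeight p N k) := by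
    rw [← nsmul_eq_mul]
    refine Finset.sum_le_card_nsmul _ _ _ fun l hl => hflat l k ?_ (hk.trans ?_)
    · refine ((mem_natsNear (by positivity)).mp hl).trans ?_
      gcongr; exact le_max_right _ _
    · gcongr; exact le_max_left _ _
  have hcard : ((natsNear (p * N) (A * √(N : ℝ))).card : ℝ) ≤ (2 * A + 1) * √(N : ℝ) :=
    (card_natsNear_le (by positivity) (by positivity)).trans (by linarith)
  rw [div_div, div_le_iff₀ (by positivity)]
  have := mul_le_mul_of_nonneg_right hcard
    (mul_nonneg hB.le (negBinWeight_nonneg (k := k) (N := N) hp))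
  linarith

theorem exists_eventually_negBinWeight_le_div_sqrt (hp : 0 < p) :
    ∃ C > 0, ∀ᶠ N : ℕ in atTop, ∀ k : ℕ, negBinWeight p N k ≤ C / √(N : ℝ) := by
  obtain ⟨B, hB, hflat⟩ := exists_negBinWeight_le_mul hp zero_le_one
  refine ⟨B, hB, ?_⟩
  filter_upwards [hflat, eventually_le_sqrt_natCast (1 + p)] with N hflat hN k
  have hsqrt : 0 < √(N : ℝ) := by linarith
  have hmode : |(negBinMode p N : ℝ) - p * N| ≤ 1 * √(N : ℝ) := by
    linarith [abs_negBinMode_sub_le hp N]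
  have hsum : (natsNear (p * N) √(N : ℝ)).card * negBinWeight p N (negBinMode p N) ≤ B := by
    calc _ = ∑ _ ∈ natsNear (p * N) √(N : ℝ), negBinWeight p N (negBinMode p N) := by
          rw [Finset.sum_const, nsmul_eq_mul]
      _ ≤ ∑ l ∈ natsNear (p * N) √(N : ℝ), B * negBinWeight p N l := by
          refine Finset.sum_le_sum fun l hl => hflat _ l hmode ?_
          rw [one_mul]; exact (mem_natsNear (by positivity)).mp hl
      _ ≤ B := by
          rw [← Finset.mul_sum, ← measureReal_partialSum_preimage_finset hp]
          exact mul_le_of_le_one_right hB.le measureReal_le_one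
  calc negBinWeight p N k ≤ negBinWeight p N (negBinMode p N) := negBinWeight_le_mode hp N k
    _ ≤ B / √(N : ℝ) := by
        rw [le_div_iff₀' hsqrt]
        refine le_trans ?_ hsum
        gcongr
        · exact negBinWeight_nonneg hp
        · exact le_card_natsNear (by positivity) (by linarith)

end LocalBounds

section Markov

variable {p : ℝ}

lemma dependsOn_mem_inter {I : Set ℕ} {A B : Set (ℕ → ℕ)} (hA : DependsOn (· ∈ A) I)
    (hB : DependsOn (· ∈ B) I) : DependsOn (· ∈ A ∩ B) I :=
  fun _ _ h => congrArg₂ And (hA h) (hB h)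

lemma dependsOn_sum_eq (I : Finset ℕ) (k : ℕ) :
    DependsOn (· ∈ {ω : ℕ → ℕ | ∑ i ∈ I, ω i = k}) (I : Set ℕ) := fun _ _ h =>
  propext (Eq.congr_left (Finset.sum_congr rfl h))

lemma dependsOn_of_partialSum {N : ℕ} {A : Set (ℕ → ℕ)}
    (hA : ∀ ω ω', (∀ t ≤ N, partialSum t ω = partialSum t ω') → (ω ∈ A ↔ ω' ∈ A)) :
    DependsOn (· ∈ A) (Finset.range N : Set ℕ) := fun ω ω' h =>
  propext (hA ω ω' fun _ ht => partialSum_congr fun i hi =>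
    h i (Finset.mem_coe.mpr (Finset.mem_range.mpr (hi.trans_le ht))))

lemma dependsOn_partialSum_preimage (N k : ℕ) :
    DependsOn (· ∈ partialSum N ⁻¹' {k}) (Finset.range N : Set ℕ) :=
  dependsOn_sum_eq (Finset.range N) k

lemma dependsOn_preimage_shift {N : ℕ} {A : Set (ℕ → ℕ)}
    (hA : DependsOn (· ∈ A) (Finset.range N : Set ℕ)) (u : ℕ) :
    DependsOn (· ∈ shift u ⁻¹' A) (Finset.Ico u (u + N) : Set ℕ) := fun ω ω' h =>
  hA fun i hi => h (u + i) (by simp_all)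

lemma measureReal_mul_le_of_fiberwise {Ω : Type*} [MeasurableSpace Ω] {μ : Measure Ω}
    [IsFiniteMeasure μ] {f : Ω → ℕ} (hf : Measurable f) {A B : Set Ω} {a b : ℝ}
    (h : ∀ k, μ.real (f ⁻¹' {k} ∩ A) * a ≤ μ.real (f ⁻¹' {k} ∩ B) * b) :
    μ.real A * a ≤ μ.real B * b := by
  have hasSum_fibers (E : Set Ω) : HasSum (fun k => μ.real (f ⁻¹' {k} ∩ E)) (μ.real E) := by
    have hmeas (k : ℕ) : MeasurableSet (f ⁻¹' {k}) := hf (measurableSet_singleton k)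
    have htsum : ∑' k, μ (f ⁻¹' {k} ∩ E) = μ E := by
      rw [← tsum_univ (f := fun k => μ (f ⁻¹' {k} ∩ E))]
      simpa [Measure.restrict_apply (hmeas _)] using
        tsum_measure_preimage_singleton (μ := μ.restrict E) Set.countable_univ fun k _ => hmeas k
    have hsum := ENNReal.hasSum_toReal (htsum.trans_ne (measure_ne_top μ E))
    rwa [← ENNReal.tsum_toReal_eq fun k => measure_ne_top μ _, htsum] at hsum
  exact hasSum_le h ((hasSum_fibers A).mul_right a) ((hasSum_fibers B).mul_right b)

lemma measureReal_inter_partialSum_le (hp : 0 < p) {n : ℕ} {I : Finset ℕ}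
    (hI : I ⊆ Finset.range n) {A : Set (ℕ → ℕ)} (hA : DependsOn (· ∈ A) (I : Set ℕ)) {D : ℝ}
    (hD : ∀ k, negBinWeight p (n - I.card) k ≤ D) (m : ℕ) :
    (walkMeasure p).real (A ∩ partialSum n ⁻¹' {m}) ≤ (walkMeasure p).real A * D := by
  set J := Finset.range n \ I
  have hJ : J.card = n - I.card := by
    rw [Finset.card_sdiff_of_subset hI, Finset.card_range]
  have hadd (ω : ℕ → ℕ) : ∑ i ∈ I, ω i + ∑ i ∈ J, ω i = partialSum n ω := by
    rw [add_comm]; exact Finset.sum_sdiff hI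
  rw [← mul_one ((walkMeasure p).real (A ∩ _))]
  refine measureReal_mul_le_of_fiberwise (f := fun ω => ∑ i ∈ I, ω i)
    (Finset.measurable_sum _ fun i _ => measurable_pi_apply i) fun s => ?_
  have hsub : {ω | ∑ i ∈ I, ω i = s} ∩ (A ∩ partialSum n ⁻¹' {m}) ⊆
      {ω | ∑ i ∈ I, ω i = s} ∩ A ∩ {ω | ∑ i ∈ J, ω i = m - s} := by
    rintro ω ⟨hs : ∑ i ∈ I, ω i = s, hA, hm : partialSum n ω = m⟩
    exact ⟨⟨hs, hA⟩, show ∑ i ∈ J, ω i = m - s by have := hadd ω; lia⟩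
  rw [mul_one]
  refine (measureReal_mono hsub).trans ?_
  rw [measureReal_inter_of_dependsOn Finset.disjoint_sdiff
    (dependsOn_mem_inter (dependsOn_sum_eq I s) hA) (dependsOn_sum_eq J _),
    measureReal_sum_eq hp, hJ]
  exact mul_le_mul_of_nonneg_left (hD _) measureReal_nonneg

/-- The Markov property, conditioning on the height at time `u`. -/
lemma measureReal_mul_le_inter_shift {u N s : ℕ} {A B : Set (ℕ → ℕ)}
    (hA : DependsOn (· ∈ A) (Finset.range u : Set ℕ))
    (hB : DependsOn (· ∈ B) (Finset.range N : Set ℕ)) {q : ℝ}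
    (hq : ∀ ω ∈ A, partialSum u ω ≤ s ∧
      q ≤ (walkMeasure p).real (B ∩ partialSum N ⁻¹' {s - partialSum u ω})) :
    (walkMeasure p).real A * q ≤
      (walkMeasure p).real (A ∩ shift u ⁻¹' B ∩ partialSum (u + N) ⁻¹' {s}) := by
  rw [← mul_one ((walkMeasure p).real (A ∩ _ ∩ _))]
  refine measureReal_mul_le_of_fiberwise (measurable_partialSum u) fun k => ?_
  rw [mul_one]
  rcases (partialSum u ⁻¹' {k} ∩ A).eq_empty_or_nonempty with hempty | ⟨ω₀, hω₀, hω₀A⟩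
  · rw [hempty, measureReal_empty, zero_mul]; exact measureReal_nonneg
  obtain ⟨hk, hqk⟩ := hq ω₀ hω₀A
  rw [show partialSum u ω₀ = k from hω₀] at hk hqk
  have hAk := dependsOn_mem_inter (dependsOn_partialSum_preimage u k) hA
  have hBk := dependsOn_mem_inter hB (dependsOn_partialSum_preimage N (s - k))
  have hdisj : Disjoint (Finset.range u) (Finset.Ico u (u + N)) :=
    Finset.disjoint_left.mpr fun i hi hi' => by
      rw [Finset.mem_range] at hi; rw [Finset.mem_Ico] at hi'; lia
  calc _ ≤ _ := mul_le_mul_of_nonneg_left hqk measureReal_nonneg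
    _ = (walkMeasure p).real (partialSum u ⁻¹' {k} ∩ A ∩
        shift u ⁻¹' (B ∩ partialSum N ⁻¹' {s - k})) := by
        rw [← measureReal_preimage_shift u (measurableSet_of_dependsOn hBk)]
        exact (measureReal_inter_of_dependsOn hdisj hAk (dependsOn_preimage_shift hBk u)).symm
    _ ≤ _ := by
        refine measureReal_mono ?_
        rintro ω ⟨⟨hωk : partialSum u ω = k, hωA⟩, hωB, hω : partialSum N (shift u ω) = s - k⟩
        refine ⟨hωk, ⟨hωA, hωB⟩, show partialSum (u + N) ω = s from ?_⟩
        rw [partialSum_add]; lia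

end Markov

section Excursions

variable {p : ℝ}

/-- The event that, after centering, the walk moves by more than `b` from its height at time `u`
during `⟦u, u + H⟧`. -/
def excursion (p : ℝ) (u H : ℕ) (b : ℝ) : Set (ℕ → ℕ) :=
  {ω | ∃ t ≤ H, b < |centeredSum p t (shift u ω)|}

/-- The event that the centered walk stays within `b` of the profile `ψ` up to time `N`. -/
def tube (p : ℝ) (ψ : ℕ → ℝ) (N : ℕ) (b : ℝ) : Set (ℕ → ℕ) :=
  {ω | ∀ t ≤ N, |centeredSum p t ω - ψ t| ≤ b}

lemma dependsOn_tube (p : ℝ) (ψ : ℕ → ℝ) (N : ℕ) (b : ℝ) :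
    DependsOn (· ∈ tube p ψ N b) (Finset.range N : Set ℕ) :=
  dependsOn_of_partialSum fun ω ω' h => forall₂_congr fun t ht => by
    rw [centeredSum, centeredSum, h t ht]

lemma excursion_eq_preimage_shift (p : ℝ) (u H : ℕ) (b : ℝ) :
    excursion p u H b = shift u ⁻¹' (tube p 0 H b)ᶜ := by
  ext ω; simp [excursion, tube]

lemma dependsOn_tube_compl (p : ℝ) (ψ : ℕ → ℝ) (N : ℕ) (b : ℝ) :
    DependsOn (· ∈ (tube p ψ N b)ᶜ) (Finset.range N : Set ℕ) :=
  fun _ _ h => congrArg Not (dependsOn_tube p ψ N b h)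

lemma exists_measureReal_excursion_le (hp : 0 < p) :
    ∃ C > 0, ∀ x : ℝ, 0 ≤ x → ∀ᶠ n : ℕ in atTop, ∀ (u H : ℕ) (b : ℝ), H * x ^ 2 ≤ 2 * n →
      (walkMeasure p).real (excursion p u H (b * √(n : ℝ))) ≤ C * Real.exp (-(x * b / 2)) := by
  obtain ⟨C, hC, θ₀, hθ₀, hmax⟩ := exists_measureReal_exists_lt_abs_centeredSum_le hp
  refine ⟨4 * Real.exp (C * 2), by positivity, fun x hx => ?_⟩
  filter_upwards [eventually_le_sqrt_natCast (x / θ₀), eventually_le_sqrt_natCast 1]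
    with n hxn hn1 u H b hHx
  have hsqrt : 0 < √(n : ℝ) := by linarith
  have hn0 : (0 : ℝ) < n := Real.sqrt_pos.mp hsqrt
  rw [excursion_eq_preimage_shift,
    measureReal_preimage_shift u (measurableSet_of_dependsOn (dependsOn_tube_compl _ _ _ _))]
  have hset : (tube p 0 H (b * √(n : ℝ)))ᶜ =
      {ω | ∃ t ≤ H, b * √(n : ℝ) < |centeredSum p t ω|} := by
    ext ω; simp [tube]
  have hquad : H * (x / √(n : ℝ)) ^ 2 ≤ 2 := by
    rw [div_pow, Real.sq_sqrt hn0.le, ← mul_div_assoc]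
    exact (div_le_iff₀ hn0).mpr hHx
  have hθ : x / √(n : ℝ) ≤ θ₀ := by rwa [div_le_iff₀ hsqrt, ← div_le_iff₀' hθ₀]
  rw [hset]
  calc _ ≤ _ := hmax (x / √(n : ℝ)) (by positivity) hθ H (b * √(n : ℝ))
    _ = 4 * Real.exp (-(x * b / 2) + C * (H * (x / √(n : ℝ)) ^ 2)) := by
        congr 2; field_simp
    _ ≤ 4 * Real.exp (-(x * b / 2) + C * 2) := by gcongr
    _ = _ := by rw [Real.exp_add]; ring

lemma sqrt_div_two_le_sqrt_sub {n H : ℕ} (hH : 4 * H ≤ 3 * n) :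
    √(n : ℝ) / 2 ≤ √((n - H : ℕ) : ℝ) := by
  apply Real.le_sqrt_of_sq_le
  rw [div_pow, Real.sq_sqrt n.cast_nonneg, Nat.cast_sub (by lia)]
  have : (4 * H : ℝ) ≤ 3 * n := by exact_mod_cast hH
  linarith

/-- Bridges satisfy the maximal inequality of the walk up to a constant as long as a positive
fraction of the increments lies outside the block: conditioning on the end point costs
`negBinWeight p (n - H) _ = O(1 / √n)`. -/
theorem exists_measureReal_excursion_inter_le (hp : 0 < p) :
    ∃ C > 0, ∀ x : ℝ, 0 ≤ x → ∀ᶠ n : ℕ in atTop, ∀ (u H m : ℕ) (b : ℝ), u + H ≤ n →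
      4 * H ≤ 3 * n → H * x ^ 2 ≤ 2 * n →
      (walkMeasure p).real (excursion p u H (b * √(n : ℝ)) ∩ partialSum n ⁻¹' {m}) ≤
        C * Real.exp (-(x * b / 2)) / √(n : ℝ) := by
  obtain ⟨C₁, hC₁, hlocal⟩ := exists_eventually_negBinWeight_le_div_sqrt hp
  obtain ⟨C₂, hC₂, hexc⟩ := exists_measureReal_excursion_le hp
  obtain ⟨N₁, hlocal⟩ := eventually_atTop.mp hlocal
  refine ⟨2 * C₁ * C₂, by positivity, fun x hx => ?_⟩
  filter_upwards [eventually_ge_atTop (4 * N₁), eventually_le_sqrt_natCast 1, hexc x hx]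
    with n hn hn1 hexc u H m b huH hH hHx
  have : 0 < √(n : ℝ) := by linarith
  have hsub : Finset.Ico u (u + H) ⊆ Finset.range n := fun i hi =>
    Finset.mem_range.mpr ((Finset.mem_Ico.mp hi).2.trans_le huH)
  have hdep : DependsOn (· ∈ excursion p u H (b * √(n : ℝ))) (Finset.Ico u (u + H) : Set ℕ) := by
    rw [excursion_eq_preimage_shift]
    exact dependsOn_preimage_shift (dependsOn_tube_compl _ _ _ _) u
  have hweight (k : ℕ) : negBinWeight p (n - (Finset.Ico u (u + H)).card) k ≤
      C₁ / (√(n : ℝ) / 2) := by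
    rw [Nat.card_Ico, add_tsub_cancel_left]
    have := sqrt_div_two_le_sqrt_sub hH
    exact (hlocal (n - H) (by lia) k).trans (by gcongr)
  calc _ ≤ _ := measureReal_inter_partialSum_le hp hsub hdep hweight m
    _ ≤ C₂ * Real.exp (-(x * b / 2)) * (C₁ / (√(n : ℝ) / 2)) := by
        gcongr
        exact hexc u H b hHx
    _ = _ := by field_simp

lemma mem_tube_zero_of_notMem_excursion {h N : ℕ} {b : ℝ} {ω : ℕ → ℕ}
    (h₁ : ω ∉ excursion p 0 h b) (h₂ : ω ∉ excursion p h (N - h) b) :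
    ω ∈ tube p 0 N (2 * b) := by
  have hshift : shift 0 ω = ω := funext fun i => congrArg ω (zero_add i)
  simp only [excursion, Set.mem_ofPred_eq, hshift, not_exists, not_and, not_lt] at h₁ h₂
  have hb : 0 ≤ b := (abs_nonneg _).trans (h₁ 0 (Nat.zero_le _))
  intro t ht
  rw [Pi.zero_apply, sub_zero]
  rcases le_total t h with hth | hth
  · linarith [h₁ t hth]
  · obtain ⟨s, rfl⟩ := Nat.exists_eq_add_of_le hth
    rw [centeredSum_add]
    linarith [abs_add_le (centeredSum p h ω) (centeredSum p s (shift h ω)), h₁ h le_rfl,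
      h₂ s (by lia)]

theorem exists_eventually_div_sqrt_le_measureReal_tube_zero_inter (hp : 0 < p) (K : ℝ) :
    ∃ lam > 0, ∃ c > 0, ∀ᶠ N : ℕ in atTop, ∀ r : ℕ, |(r : ℝ) - p * N| ≤ K * √(N : ℝ) →
      c / √(N : ℝ) ≤
        (walkMeasure p).real (tube p 0 N (lam * √(N : ℝ)) ∩ partialSum N ⁻¹' {r}) := by
  obtain ⟨c, hc, hlocal⟩ := exists_eventually_div_sqrt_le_negBinWeight hp K
  obtain ⟨C, hC, hexc⟩ := exists_measureReal_excursion_inter_le hp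
  obtain ⟨b, hb, hbC⟩ : ∃ b > 0, C * Real.exp (-(1 * b / 2)) ≤ c / 4 := by
    refine ⟨2 * (|Real.log (c / (4 * C))| + 1), by positivity, ?_⟩
    rw [← le_div_iff₀' hC, ← Real.le_log_iff_exp_le (by positivity), div_div]
    linarith [neg_abs_le (Real.log (c / (4 * C)))]
  refine ⟨2 * b, by positivity, c / 2, by positivity, ?_⟩
  filter_upwards [hlocal, hexc 1 zero_le_one, eventually_ge_atTop 2] with N hlocal hexc hN r hr
  have hcover : partialSum N ⁻¹' {r} ⊆
      tube p 0 N (2 * b * √(N : ℝ)) ∩ partialSum N ⁻¹' {r} ∪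
      (excursion p 0 (N / 2) (b * √(N : ℝ)) ∩ partialSum N ⁻¹' {r} ∪
        excursion p (N / 2) (N - N / 2) (b * √(N : ℝ)) ∩ partialSum N ⁻¹' {r}) := by
    intro ω hω
    by_contra! hnot
    simp only [Set.mem_union, Set.mem_inter_iff, hω, and_true, not_or, mul_assoc] at hnot
    exact hnot.1 (mem_tube_zero_of_notMem_excursion hnot.2.1 hnot.2.2)
  have hblock {u H : ℕ} (huH : u + H ≤ N) (hH : 4 * H ≤ 3 * N) :
      (walkMeasure p).real (excursion p u H (b * √(N : ℝ)) ∩ partialSum N ⁻¹' {r}) ≤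
        c / 4 / √(N : ℝ) := by
    have hHN : (H : ℝ) ≤ N := by exact_mod_cast (Nat.le_add_left H u).trans huH
    refine (hexc u H r b huH hH (by linarith)).trans ?_
    gcongr
  have hunion := (measureReal_mono hcover (μ := walkMeasure p)).trans (measureReal_union_le _ _)
  have hunion' := measureReal_union_le (μ := walkMeasure p)
    (excursion p 0 (N / 2) (b * √(N : ℝ)) ∩ partialSum N ⁻¹' {r})
    (excursion p (N / 2) (N - N / 2) (b * √(N : ℝ)) ∩ partialSum N ⁻¹' {r})
  have hfirst := hblock (u := 0) (H := N / 2) (by lia) (by lia)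
  have hsecond := hblock (u := N / 2) (H := N - N / 2) (by lia) (by lia)
  have htotal := hlocal r hr
  rw [← measureReal_partialSum_preimage hp] at htotal
  have hsplit : c / √(N : ℝ) = c / 2 / √(N : ℝ) + (c / 4 / √(N : ℝ) + c / 4 / √(N : ℝ)) := by ring
  linarith

/-- The event that, after centering, the walk moves by more than `b` within one of the blocks
`⟦j * D, (j + 1) * D⟧` before time `n`. -/
def blockExcursion (p : ℝ) (n D : ℕ) (b : ℝ) : Set (ℕ → ℕ) :=
  {ω | ∃ j t : ℕ, t ≤ D ∧ j * D + t ≤ n ∧ b < |centeredSum p t (shift (j * D) ω)|}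

lemma blockExcursion_subset (p : ℝ) (b : ℝ) {n R : ℕ} (hR : 0 < R) :
    blockExcursion p n (n / R + 1) b ⊆ ⋃ j ∈ Finset.range R,
      excursion p (min (j * (n / R + 1)) n) (min (n / R + 1) (n - j * (n / R + 1))) b := by
  rintro ω ⟨j, t, htD, hjt, hb⟩
  have hj : j < R := by
    by_contra! hRj
    have := Nat.mul_le_mul_right (n / R + 1) hRj
    have := Nat.lt_mul_div_succ n hR
    lia
  simp only [Set.mem_iUnion, Finset.mem_range]
  refine ⟨j, hj, t, le_min htD (by lia), ?_⟩
  rwa [min_eq_left (by lia)]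

lemma exists_sq_mul_exp_neg_le {b q : ℝ} (hb : 0 < b) (hq : 0 < q) :
    ∃ x : ℕ, 2 ≤ x ∧ (x : ℝ) ^ 2 * Real.exp (-(x * b)) ≤ q := by
  have hlim : Tendsto (fun x : ℕ => (x : ℝ) ^ 2 * Real.exp (-(x * b))) atTop (𝓝 0) := by
    have hscaled := ((Real.tendsto_pow_mul_exp_neg_atTop_nhds_zero 2).comp
      (tendsto_natCast_atTop_atTop.atTop_mul_const hb)).div_const (b ^ 2)
    rw [zero_div] at hscaled
    exact hscaled.congr fun x => by simp only [Function.comp_apply]; field_simp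
  obtain ⟨x, hx, hx2⟩ := ((hlim.eventually_le_const hq).and (eventually_ge_atTop 2)).exists
  exact ⟨x, hx2, hx⟩

theorem exists_measureReal_blockExcursion_inter_le (hp : 0 < p) (M : ℝ) {b η : ℝ} (hb : 0 < b)
    (hη : 0 < η) :
    ∃ R > 0, ∀ᶠ n : ℕ in atTop, ∀ m : ℕ, |(m : ℝ) - p * n| ≤ M * √(n : ℝ) →
      (walkMeasure p).real
        (blockExcursion p n (n / R + 1) (b * √(n : ℝ)) ∩ partialSum n ⁻¹' {m}) ≤
        η * negBinWeight p n m := by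
  obtain ⟨c, hc, hlocal⟩ := exists_eventually_div_sqrt_le_negBinWeight hp M
  obtain ⟨C, hC, hexc⟩ := exists_measureReal_excursion_inter_le hp
  obtain ⟨x, hx2, hx⟩ := exists_sq_mul_exp_neg_le (half_pos hb)
    (by positivity : 0 < η * c / C)
  have hx0 : 0 < x := by lia
  refine ⟨x ^ 2, by positivity, ?_⟩
  filter_upwards [hlocal, hexc x x.cast_nonneg, eventually_ge_atTop (x ^ 2)]
    with n hlocal hexc hn m hm
  have hR4 : 4 ≤ x ^ 2 := by nlinarith
  have hblock : n / x ^ 2 + 1 ≤ n / 4 + 1 := by gcongr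
  have hlen : ((n / x ^ 2 + 1 : ℕ) : ℝ) * x ^ 2 ≤ 2 * n := by
    have : (n / x ^ 2 + 1) * x ^ 2 ≤ 2 * n := by linarith [Nat.div_mul_le_self n (x ^ 2)]
    exact_mod_cast this
  have hterm (j : ℕ) : (walkMeasure p).real
      (excursion p (min (j * (n / x ^ 2 + 1)) n) (min (n / x ^ 2 + 1) (n - j * (n / x ^ 2 + 1)))
        (b * √(n : ℝ)) ∩ partialSum n ⁻¹' {m}) ≤ C * Real.exp (-(x * (b / 2))) / √(n : ℝ) := by
    rw [← mul_div_assoc]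
    refine hexc _ _ m b (by lia) (by lia) (le_trans ?_ hlen)
    gcongr
    exact min_le_left _ _
  have hsub := Set.inter_subset_inter_left (partialSum n ⁻¹' {m})
    (blockExcursion_subset p (b * √(n : ℝ)) (n := n) (pow_pos hx0 2))
  rw [Set.iUnion₂_inter] at hsub
  calc _ ≤ _ := (measureReal_mono hsub (measure_ne_top _ _)).trans
        (measureReal_biUnion_finset_le _ _)
    _ ≤ ∑ _ ∈ Finset.range (x ^ 2), C * Real.exp (-(x * (b / 2))) / √(n : ℝ) :=
        Finset.sum_le_sum fun j _ => hterm j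
    _ = C * (x ^ 2 * Real.exp (-(x * (b / 2)))) / √(n : ℝ) := by
        rw [Finset.sum_const, Finset.card_range, nsmul_eq_mul]; push_cast; ring
    _ ≤ C * (η * c / C) / √(n : ℝ) := by gcongr
    _ = η * (c / √(n : ℝ)) := by field_simp
    _ ≤ η * negBinWeight p n m := by gcongr; exact hlocal m hm

end Excursions

section Corridors

variable {p : ℝ} {ψ : ℕ → ℝ}

/-- The event that the centered walk stays within `b` of the profile `ψ` up to time `u` and ends
within the possibly much smaller distance `h` of it. -/
def corridor (p : ℝ) (ψ : ℕ → ℝ) (u : ℕ) (h b : ℝ) : Set (ℕ → ℕ) :=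
  tube p ψ u b ∩ {ω | |centeredSum p u ω - ψ u| ≤ h}

lemma dependsOn_corridor (p : ℝ) (ψ : ℕ → ℝ) (u : ℕ) (h b : ℝ) :
    DependsOn (· ∈ corridor p ψ u h b) (Finset.range u : Set ℕ) :=
  dependsOn_mem_inter (dependsOn_tube p ψ u b)
    (dependsOn_of_partialSum fun ω ω' h => by
      rw [Set.mem_ofPred_eq, Set.mem_ofPred_eq, centeredSum, centeredSum, h u le_rfl])

lemma mem_tube_add {u N : ℕ} {h b r d : ℝ} {ω : ℕ → ℕ} (hω : ω ∈ corridor p ψ u h b)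
    (hN : shift u ω ∈ tube p 0 N r) (hψ : ∀ t ≤ N, |ψ (u + t) - ψ u| ≤ d)
    (hb : h + r + d ≤ b) : ω ∈ tube p ψ (u + N) b := by
  intro t ht
  rcases le_total t u with htu | htu
  · exact hω.1 t htu
  · obtain ⟨s, rfl⟩ := Nat.exists_eq_add_of_le htu
    have hωu : |centeredSum p u ω - ψ u| ≤ h := hω.2
    have hNs : |centeredSum p s (shift u ω) - 0| ≤ r := hN s (by lia)
    have hψs := hψ s (by lia)
    rw [centeredSum_add]
    rw [abs_le] at *
    constructor <;> linarith

/-- If `ψ` moves by at most `d` on a block, a walk in the corridor reaches any prescribed height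
within `h` of `ψ` at the end of the block with probability at least `q`. -/
lemma measureReal_corridor_mul_le {u N k : ℕ} {h b r d q : ℝ}
    (hψ : ∀ t ≤ N, |ψ (u + t) - ψ u| ≤ d) (hb : h + r + d ≤ b) (hpN : 2 * h + d ≤ p * N)
    (hq : ∀ l : ℕ, |(l : ℝ) - p * N| ≤ 2 * h + d →
      q ≤ (walkMeasure p).real (tube p 0 N r ∩ partialSum N ⁻¹' {l}))
    (hk : |(k : ℝ) - (p * (u + N) + ψ (u + N))| ≤ h) :
    (walkMeasure p).real (corridor p ψ u h b) * q ≤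
      (walkMeasure p).real (tube p ψ (u + N) b ∩ partialSum (u + N) ⁻¹' {k}) := by
  refine (measureReal_mul_le_inter_shift (dependsOn_corridor p ψ u h b) (dependsOn_tube p 0 N r)
    (s := k) fun ω hω => ?_).trans (measureReal_mono ?_ (measure_ne_top _ _))
  · have hωu : |partialSum u ω - p * u - ψ u| ≤ h := hω.2
    have hψN := hψ N le_rfl
    have hgap : |(k : ℝ) - partialSum u ω - p * N| ≤ 2 * h + d := by
      rw [abs_le] at *
      constructor <;> linarith
    have hle : partialSum u ω ≤ k := by
      have : (partialSum u ω : ℝ) ≤ k := by linarith [neg_le_of_abs_le hgap]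
      exact_mod_cast this
    refine ⟨hle, hq _ ?_⟩
    rwa [Nat.cast_sub hle]
  · rintro ω ⟨⟨hω, hN⟩, hend⟩
    exact ⟨mem_tube_add hω hN hψ hb, hend⟩

lemma measureReal_corridor_mul_le_add {u N : ℕ} {h b r d q : ℝ} (hh : 1 ≤ h) (hq₀ : 0 ≤ q)
    (hψ : ∀ t ≤ N, |ψ (u + t) - ψ u| ≤ d) (hb : h + r + d ≤ b) (hpN : 2 * h + d ≤ p * N)
    (hq : ∀ l : ℕ, |(l : ℝ) - p * N| ≤ 2 * h + d →
      q ≤ (walkMeasure p).real (tube p 0 N r ∩ partialSum N ⁻¹' {l}))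
    (hcenter : 0 ≤ p * (u + N) + ψ (u + N)) :
    (walkMeasure p).real (corridor p ψ u h b) * (h * q) ≤
      (walkMeasure p).real (corridor p ψ (u + N) h b) := by
  set window := natsNear (p * (u + N) + ψ (u + N)) h
  have hmem {k : ℕ} (hk : k ∈ window) : |(k : ℝ) - (p * (u + N) + ψ (u + N))| ≤ h :=
    (mem_natsNear (by positivity)).mp hk
  calc (walkMeasure p).real (corridor p ψ u h b) * (h * q)
      ≤ window.card • ((walkMeasure p).real (corridor p ψ u h b) * q) := by
        rw [nsmul_eq_mul, mul_left_comm]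
        gcongr
        exact le_card_natsNear hcenter hh
    _ ≤ ∑ k ∈ window,
        (walkMeasure p).real (tube p ψ (u + N) b ∩ partialSum (u + N) ⁻¹' {k}) :=
        Finset.card_nsmul_le_sum _ _ _ fun k hk =>
          measureReal_corridor_mul_le hψ hb hpN hq (hmem hk)
    _ = (walkMeasure p).real
        (⋃ k ∈ window, tube p ψ (u + N) b ∩ partialSum (u + N) ⁻¹' {k}) := by
        refine (measureReal_biUnion_finset (fun k _ l _ hkl => ?_) fun k _ => ?_).symm
        · exact ((Set.disjoint_singleton.mpr hkl).preimage (partialSum (u + N))).mono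
            Set.inter_subset_right Set.inter_subset_right
        · exact (measurableSet_of_dependsOn (dependsOn_tube _ _ _ _)).inter
            (measurable_partialSum _ (measurableSet_singleton k))
    _ ≤ _ := by
        refine measureReal_mono (Set.iUnion₂_subset fun k hk => ?_) (measure_ne_top _ _)
        rintro ω ⟨hω, rfl : partialSum (u + N) ω = k⟩
        refine ⟨hω, ?_⟩
        have := hmem hk
        rwa [← sub_sub, ← Nat.cast_add] at this

lemma corridor_zero (hψ₀ : ψ 0 = 0) {h b : ℝ} (hh : 0 ≤ h) (hb : 0 ≤ b) :
    corridor p ψ 0 h b = Set.univ := by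
  refine Set.eq_univ_of_forall fun ω => ⟨fun t ht => ?_, ?_⟩
  · obtain rfl := Nat.le_zero.mp ht
    simpa [centeredSum, partialSum, hψ₀] using hb
  · simpa [centeredSum, partialSum, hψ₀] using hh

lemma eventually_forall_block {P : ℕ → Prop} (hP : ∀ᶠ N in atTop, P N) {J : ℕ} (hJ : 0 < J) :
    ∀ᶠ n in atTop, ∀ N, n / J ≤ N → P N := by
  obtain ⟨N₀, hN₀⟩ := eventually_atTop.mp hP
  filter_upwards [(Nat.tendsto_div_const_atTop hJ.ne').eventually_ge_atTop N₀] with n hn N hN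
  exact hN₀ N (hn.trans hN)

lemma exists_sqrt_le_mul_sqrt {κ : ℝ} (hκ : 0 < κ) :
    ∃ J > 0, ∀ n N : ℕ, N ≤ 2 * (n / J) → √(N : ℝ) ≤ κ * √(n : ℝ) := by
  obtain ⟨J, hJ⟩ := exists_nat_ge (2 / κ ^ 2)
  have hJ0 : (0 : ℝ) < J := lt_of_lt_of_le (by positivity) hJ
  refine ⟨J, by exact_mod_cast hJ0, fun n N hN => ?_⟩
  have hN' : (N : ℝ) ≤ 2 * (n / J) :=
    (by exact_mod_cast hN : (N : ℝ) ≤ 2 * (n / J : ℕ)).trans (by gcongr; exact Nat.cast_div_le)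
  rw [← Real.sqrt_sq hκ.le, ← Real.sqrt_mul (by positivity)]
  refine Real.sqrt_le_sqrt (hN'.trans ?_)
  calc 2 * ((n : ℝ) / J) = n * (2 / J) := by ring
    _ ≤ n * κ ^ 2 := by
        gcongr
        rwa [div_le_iff₀ hJ0, ← div_le_iff₀' (by positivity)]
    _ = _ := mul_comm _ _

/-- Over blocks of length of order `n`, the walk tracks a profile with Lipschitz constant of order
`1 / √n`: the profile moves by at most the natural fluctuation of the walk in a block. -/
theorem exists_eventually_block_bounds (hp : 0 < p) {K a : ℝ} (hK : 0 ≤ K) (ha : 0 < a) :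
    ∃ J > 0, ∃ lam > 0, ∃ c > 0, ∀ᶠ n : ℕ in atTop, ∀ N : ℕ, n / J ≤ N → N ≤ 2 * (n / J) →
      K * N / √(n : ℝ) ≤ √(N : ℝ) ∧ (2 + lam) * √(N : ℝ) ≤ a * √(n : ℝ) ∧
      3 * √(N : ℝ) ≤ p * N ∧ ∀ l : ℕ, |(l : ℝ) - p * N| ≤ 3 * √(N : ℝ) →
        c / √(N : ℝ) ≤
          (walkMeasure p).real (tube p 0 N (lam * √(N : ℝ)) ∩ partialSum N ⁻¹' {l}) := by
  obtain ⟨lam, hlam, c, hc, htube⟩ := exists_eventually_div_sqrt_le_measureReal_tube_zero_inter hp 3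
  obtain ⟨J, hJ, hscale⟩ :=
    exists_sqrt_le_mul_sqrt (lt_min (inv_pos.mpr (by positivity : 0 < K + 1))
      (div_pos ha (by positivity : 0 < 2 + lam)))
  refine ⟨J, hJ, lam, hlam, c, hc, ?_⟩
  filter_upwards [eventually_forall_block (eventually_le_sqrt_natCast (3 / p)) hJ,
    eventually_forall_block htube hJ, eventually_gt_atTop 0] with n hlarge htube hn N hnN hNn
  have hNN : √(N : ℝ) * √(N : ℝ) = N := Real.mul_self_sqrt N.cast_nonneg
  have hn0 : 0 < √(n : ℝ) := Real.sqrt_pos.mpr (by exact_mod_cast hn)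
  have hslope : (K + 1) * √(N : ℝ) ≤ √(n : ℝ) := by
    rw [← le_div_iff₀' (by positivity), div_eq_inv_mul]
    exact (hscale n N hNn).trans (by gcongr; exact min_le_left _ _)
  have hwidth : (2 + lam) * √(N : ℝ) ≤ a * √(n : ℝ) := by
    rw [← le_div_iff₀' (by positivity), mul_div_right_comm]
    exact (hscale n N hNn).trans (by gcongr; exact min_le_right _ _)
  refine ⟨?_, hwidth, ?_, htube N hnN⟩
  · rw [div_le_iff₀ hn0]
    calc K * N ≤ (K + 1) * N := by gcongr; linarith
      _ = √(N : ℝ) * ((K + 1) * √(N : ℝ)) := by rw [mul_left_comm, hNN]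
      _ ≤ √(N : ℝ) * √(n : ℝ) := by gcongr
  · have := (div_le_iff₀' hp).mp (hlarge N hnN)
    calc 3 * √(N : ℝ) ≤ p * √(N : ℝ) * √(N : ℝ) := by gcongr
      _ = p * N := by rw [mul_assoc, hNN]

lemma pow_le_measureReal_corridor {D : ℕ} {h b r d q : ℝ} (hψ₀ : ψ 0 = 0)
    (hψ : ∀ u, ∀ t ≤ D, |ψ (u + t) - ψ u| ≤ d) (hcenter : ∀ u : ℕ, 0 ≤ p * u + ψ u)
    (hh : 1 ≤ h) (hb₀ : 0 ≤ b) (hq₀ : 0 ≤ q) (hb : h + r + d ≤ b) (hpD : 2 * h + d ≤ p * D)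
    (hq : ∀ l : ℕ, |(l : ℝ) - p * D| ≤ 2 * h + d →
      q ≤ (walkMeasure p).real (tube p 0 D r ∩ partialSum D ⁻¹' {l})) (j : ℕ) :
    (h * q) ^ j ≤ (walkMeasure p).real (corridor p ψ (j * D) h b) := by
  induction j with
  | zero => simp [corridor_zero hψ₀ (zero_le_one.trans hh) hb₀]
  | succ j ih =>
    rw [pow_succ, Nat.succ_mul]
    have := hcenter (j * D + D)
    rw [Nat.cast_add] at this
    exact (mul_le_mul_of_nonneg_right ih (by positivity)).trans
      (measureReal_corridor_mul_le_add hh hq₀ (hψ _) hb hpD hq this)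

lemma exists_last_block {n J : ℕ} (hJ : 0 < J) (hn : J ≤ n / J) :
    ∃ N, (J - 1) * (n / J) + N = n ∧ n / J ≤ N ∧ N ≤ 2 * (n / J) := by
  have := Nat.mod_lt n hJ
  refine ⟨n / J + n % J, ?_, by lia, by lia⟩
  rw [← add_assoc, ← Nat.succ_mul, Nat.succ_eq_add_one, Nat.sub_add_cancel hJ, Nat.div_add_mod]

lemma mul_add_nonneg_of_lipschitz {K s : ℝ} (hψ₀ : ψ 0 = 0)
    (hψ : ∀ u v, |ψ (u + v) - ψ u| ≤ K * v / s) (hK : K / s ≤ p) (u : ℕ) : 0 ≤ p * u + ψ u := by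
  have hu := hψ 0 u
  rw [zero_add, hψ₀, sub_zero, mul_div_right_comm] at hu
  have := mul_le_mul_of_nonneg_right hK u.cast_nonneg
  linarith [neg_le_of_abs_le hu]

/-- A bridge follows a profile at the diffusive scale with positive probability: the profile is
tracked in `J - 1` blocks of length `n / J`, and a last slightly longer block is steered to the
end point. -/
theorem exists_eventually_mul_negBinWeight_le_measureReal_tube_inter (hp : 0 < p) {K a : ℝ}
    (hK : 0 ≤ K) (ha : 0 < a) :
    ∃ c > 0, ∀ᶠ n : ℕ in atTop, ∀ ψ : ℕ → ℝ, ψ 0 = 0 →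
      (∀ u v, |ψ (u + v) - ψ u| ≤ K * v / √(n : ℝ)) → ∀ m : ℕ, (m : ℝ) = p * n + ψ n →
      c * negBinWeight p n m ≤
        (walkMeasure p).real (tube p ψ n (a * √(n : ℝ)) ∩ partialSum n ⁻¹' {m}) := by
  obtain ⟨C, hC, hlocal⟩ := exists_eventually_negBinWeight_le_div_sqrt hp
  obtain ⟨J, hJ, lam, _, c, hc, hblock⟩ := exists_eventually_block_bounds hp hK ha
  refine ⟨c ^ (J - 1) * c / C, by positivity, ?_⟩
  filter_upwards [hlocal, hblock, eventually_le_sqrt_natCast (K / p),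
    (Nat.tendsto_div_const_atTop hJ.ne').eventually_ge_atTop J]
    with n hlocal hblock hKn hJn ψ hψ₀ hψ m hm
  obtain ⟨N, hsum, hDN, hND⟩ := exists_last_block hJ hJn
  set D := n / J
  have hD1 : 1 ≤ √(D : ℝ) := Real.one_le_sqrt.mpr (Nat.one_le_cast.mpr (by lia))
  have hsqrtN : √(D : ℝ) ≤ √(N : ℝ) := Real.sqrt_le_sqrt (by exact_mod_cast hDN)
  have hNn : √(N : ℝ) ≤ √(n : ℝ) := Real.sqrt_le_sqrt (by exact_mod_cast (by lia : N ≤ n))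
  have hn0 : 0 < √(n : ℝ) := by linarith
  have hslope : K / √(n : ℝ) ≤ p := (div_le_comm₀ hp hn0).mp hKn
  have hinc {M : ℕ} (hM : K * M / √(n : ℝ) ≤ √(M : ℝ)) (u t : ℕ) (ht : t ≤ M) :
      |ψ (u + t) - ψ u| ≤ √(M : ℝ) := ((hψ u t).trans (by gcongr)).trans hM
  obtain ⟨hKD, hwidthD, hpD, hqD⟩ := hblock D le_rfl (by lia)
  obtain ⟨hKN, hwidthN, hpN, hqN⟩ := hblock N hDN hND
  have htrack := pow_le_measureReal_corridor (b := a * √(n : ℝ)) hψ₀ (hinc hKD)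
    (mul_add_nonneg_of_lipschitz hψ₀ hψ hslope) hD1 (by positivity) (by positivity)
    (by linarith) (by linarith) (fun l hl => hqD l (by linarith)) (J - 1)
  rw [mul_div_cancel₀ c (by positivity : √(D : ℝ) ≠ 0)] at htrack
  have hsteer := measureReal_corridor_mul_le (k := m) (hinc hKN ((J - 1) * D))
    (by linarith : √(D : ℝ) + lam * √(N : ℝ) + √(N : ℝ) ≤ a * √(n : ℝ)) (by linarith)
    (fun l hl => hqN l (by linarith)) (by
      rw [← Nat.cast_add, hsum, hm, sub_self, abs_zero]; positivity)
  rw [hsum] at hsteer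
  calc c ^ (J - 1) * c / C * negBinWeight p n m ≤ c ^ (J - 1) * c / C * (C / √(n : ℝ)) := by
        gcongr
        exact hlocal m
    _ = c ^ (J - 1) * (c / √(n : ℝ)) := by field_simp
    _ ≤ c ^ (J - 1) * (c / √(N : ℝ)) := by gcongr; linarith
    _ ≤ _ := (mul_le_mul_of_nonneg_right htrack (by positivity)).trans hsteer

end Corridors

section Paths

variable {p : ℝ} {n m : ℕ} {x : ℤ} {L : ℤ → ℤ}

/-- The increasing path on `⟦0, n⟧` started at `x` with increments `ω`. -/
def pathOf (x : ℤ) (n : ℕ) (ω : ℕ → ℕ) (s : ℤ) : ℤ :=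
  x + partialSum (min s.toNat n) ω

/-- The sequence of increments of an increasing path. -/
def increments (L : ℤ → ℤ) (i : ℕ) : ℕ :=
  (L (i + 1) - L i).toNat

lemma pathOf_natCast (x : ℤ) {t : ℕ} (ht : t ≤ n) (ω : ℕ → ℕ) :
    pathOf x n ω t = x + partialSum t ω := by
  simp [pathOf, ht]

lemma incrPath_pathOf (x : ℤ) (n : ℕ) (ω : ℕ → ℕ) : IncrPath 0 n (pathOf x n ω) := by
  refine ⟨fun j hj _ => ?_, fun s hs => ?_, fun s hs => ?_⟩
  · simp only [pathOf]
    gcongr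
    exact Finset.sum_le_sum_of_subset (Finset.range_mono (by lia))
  · simp [pathOf, Int.toNat_of_nonpos hs]
  · simp [pathOf, min_eq_right (by lia : n ≤ s.toNat)]

lemma pathOf_mem_omegaPath_iff (ω : ℕ → ℕ) :
    pathOf x n ω ∈ OmegaPath 0 n x (x + m) ↔ ω ∈ partialSum n ⁻¹' {m} := by
  have hend := pathOf_natCast x le_rfl (n := n) ω
  have hstart : pathOf x n ω 0 = x := by simp [pathOf, partialSum]
  simp [OmegaPath, incrPath_pathOf, hend, hstart]

lemma add_partialSum_increments (hL : IncrPath 0 n L) {t : ℕ} (ht : t ≤ n) :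
    L 0 + partialSum t (increments L) = L t := by
  induction t with
  | zero => simp [partialSum]
  | succ t ih =>
    have hstep := hL.1 t (by positivity) (by exact_mod_cast ht)
    rw [partialSum, Finset.sum_range_succ, Nat.cast_add, ← add_assoc, ← partialSum,
      ih (by lia), increments, Int.toNat_of_nonneg (by lia)]
    push_cast
    ring

lemma pathOf_increments (hL : IncrPath 0 n L) : pathOf (L 0) n (increments L) = L := by
  ext s
  rw [pathOf, add_partialSum_increments hL (min_le_right _ _)]
  rcases le_total s 0 with hs | hs
  · rw [hL.2.1 s hs, Int.toNat_of_nonpos hs, Nat.zero_min, Nat.cast_zero]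
  · rcases le_total s n with hsn | hsn
    · rw [min_eq_left (by lia), Int.toNat_of_nonneg hs]
    · rw [min_eq_right (by lia), hL.2.2 s hsn]

lemma increments_pathOf (x : ℤ) (ω : ℕ → ℕ) {i : ℕ} (hi : i < n) :
    increments (pathOf x n ω) i = ω i := by
  have hsucc := pathOf_natCast x (Nat.succ_le_of_lt hi) ω
  rw [Nat.cast_succ] at hsucc
  rw [increments, hsucc, pathOf_natCast x hi.le, partialSum, partialSum, Finset.sum_range_succ]
  lia

lemma pathOf_eq_iff (hL : IncrPath 0 n L) (ω : ℕ → ℕ) :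
    pathOf (L 0) n ω = L ↔ ∀ i ∈ Finset.range n, ω i = increments L i := by
  constructor
  · intro h i hi
    rw [← increments_pathOf (L 0) ω (Finset.mem_range.mp hi), h]
  · refine fun h => Eq.trans (funext fun s => ?_) (pathOf_increments hL)
    rw [pathOf, pathOf, partialSum_congr fun i hi =>
      h i (Finset.mem_range.mpr (hi.trans_le (min_le_right _ _)))]

/-- The probability that the walk follows a given path of length `n` and total increment `m`. -/
noncomputable def pathWeight (p : ℝ) (n m : ℕ) : ℝ :=
  (p / (1 + p)) ^ m * (1 / (1 + p)) ^ n

lemma preimage_pathOf_singleton (hL : IncrPath 0 n L) :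
    pathOf (L 0) n ⁻¹' {L} = {ω | ∀ i ∈ Finset.range n, ω i = increments L i} :=
  Set.ext fun ω => pathOf_eq_iff hL ω

lemma measureReal_preimage_pathOf_singleton (hp : 0 < p) (hL : L ∈ OmegaPath 0 n x (x + m)) :
    (walkMeasure p).real (pathOf x n ⁻¹' {L}) = pathWeight p n m := by
  obtain ⟨hincr, rfl, hend⟩ := hL
  have hsum : partialSum n (increments L) = m := by
    have := add_partialSum_increments hincr le_rfl
    lia
  rw [preimage_pathOf_singleton hincr, measureReal_cylinder hp, Finset.card_range, ← partialSum,
    hsum, pathWeight]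

lemma measurableSet_preimage_pathOf_singleton (hL : L ∈ OmegaPath 0 n x (x + m)) :
    MeasurableSet (pathOf x n ⁻¹' {L}) := by
  obtain ⟨hincr, rfl, -⟩ := hL
  rw [preimage_pathOf_singleton hincr]
  exact measurableSet_of_dependsOn (dependsOn_cylinder _ _)

lemma support_increments_subset (hL : IncrPath 0 n L) {i : ℕ} (hi : increments L i ≠ 0) :
    i < n := by
  by_contra! hni
  refine hi ?_
  rw [increments, hL.2.2 i (by lia), hL.2.2 (i + 1) (by lia), sub_self, Int.toNat_zero]

lemma finite_omegaPath (n : ℕ) (x : ℤ) (m : ℕ) : (OmegaPath 0 n x (x + m)).Finite := by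
  refine ((Finset.piAntidiag (Finset.range n) m).finite_toSet.image (pathOf x n)).subset ?_
  rintro L ⟨hincr, rfl, hend⟩
  refine ⟨increments L, ?_, pathOf_increments hincr⟩
  have hsum := add_partialSum_increments hincr le_rfl
  rw [SetLike.mem_coe, Finset.mem_piAntidiag, ← partialSum]
  exact ⟨by lia, fun i hi => Finset.mem_range.mpr (support_increments_subset hincr hi)⟩

theorem measureReal_preimage_pathOf (hp : 0 < p) {A : Set (ℤ → ℤ)}
    (hA : A ⊆ OmegaPath 0 n x (x + m)) :
    (walkMeasure p).real (pathOf x n ⁻¹' A) = A.ncard * pathWeight p n m := by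
  have hfin := (finite_omegaPath n x m).subset hA
  lift A to Finset (ℤ → ℤ) using hfin
  rw [← sum_measureReal_preimage_singleton _ fun L hL =>
    measurableSet_preimage_pathOf_singleton (hA hL), Set.ncard_coe_finset, ← nsmul_eq_mul,
    Finset.sum_congr rfl fun L hL => measureReal_preimage_pathOf_singleton hp (hA hL),
    Finset.sum_const]

lemma negBinWeight_eq_ncard_mul_pathWeight (hp : 0 < p) (n : ℕ) (x : ℤ) (m : ℕ) :
    negBinWeight p n m = (OmegaPath 0 n x (x + m)).ncard * pathWeight p n m := by
  rw [← measureReal_preimage_pathOf hp subset_rfl, ← measureReal_partialSum_preimage hp]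
  congr 1
  ext ω
  exact (pathOf_mem_omegaPath_iff ω).symm

/-- The paths from `(0, x)` to `(n, y)` that stay within `b` of the curve `φ`. -/
def pathTube (n : ℕ) (x y : ℤ) (φ : ℕ → ℝ) (b : ℝ) : Set (ℤ → ℤ) :=
  {L ∈ OmegaPath 0 n x y | ∀ t : ℕ, t ≤ n → |(L t : ℝ) - φ t| ≤ b}

lemma pathTube_subset_omegaPath (n : ℕ) (x y : ℤ) (φ : ℕ → ℝ) (b : ℝ) :
    pathTube n x y φ b ⊆ OmegaPath 0 n x y :=
  Set.sep_subset _ _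

theorem exists_eventually_mul_ncard_omegaPath_le_ncard_pathTube (hp : 0 < p) {K a : ℝ}
    (hK : 0 ≤ K) (ha : 0 < a) :
    ∃ c > (0 : ℝ), ∀ᶠ n : ℕ in atTop, ∀ x y : ℤ, x ≤ y → ∀ φ : ℕ → ℝ, φ 0 = x → φ n = y →
      (∀ u v, |φ (u + v) - φ u - p * v| ≤ K * v / √(n : ℝ)) →
      c * (OmegaPath 0 n x y).ncard ≤ ((pathTube n x y φ (a * √(n : ℝ))).ncard : ℝ) := by
  obtain ⟨c, hc, hbridge⟩ := exists_eventually_mul_negBinWeight_le_measureReal_tube_inter hp hK ha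
  refine ⟨c, hc, ?_⟩
  filter_upwards [hbridge] with n hbridge x y hxy φ hφ₀ hφn hφ
  obtain ⟨m, rfl⟩ := Int.le.dest hxy
  set ψ : ℕ → ℝ := fun t => φ t - x - p * t with hψ
  have hcount := hbridge ψ (by simp [hψ, hφ₀]) (fun u v => by
    convert hφ u v using 2
    simp only [hψ]
    push_cast
    ring) m (by simp [hψ, hφn])
  have hsub : tube p ψ n (a * √(n : ℝ)) ∩ partialSum n ⁻¹' {m} ⊆
      pathOf x n ⁻¹' pathTube n x (x + m) φ (a * √(n : ℝ)) := by
    rintro ω ⟨hω, hend⟩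
    refine ⟨(pathOf_mem_omegaPath_iff ω).mpr hend, fun t ht => ?_⟩
    convert hω t ht using 2
    rw [pathOf_natCast x ht, centeredSum]
    push_cast
    ring
  have := hcount.trans (measureReal_mono hsub (measure_ne_top _ _))
  rw [measureReal_preimage_pathOf hp (pathTube_subset_omegaPath ..),
    negBinWeight_eq_ncard_mul_pathWeight hp n x, ← mul_assoc] at this
  exact le_of_mul_le_mul_right this (by unfold pathWeight; positivity)

/-- The paths from `(0, x)` to `(n, y)` that deviate by more than `b` from the slope `p` within one
of the blocks `⟦j * D, (j + 1) * D⟧`. -/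
def oscillatingPaths (p : ℝ) (n : ℕ) (x y : ℤ) (D : ℕ) (b : ℝ) : Set (ℤ → ℤ) :=
  {L ∈ OmegaPath 0 n x y | ∃ j t : ℕ, t ≤ D ∧ j * D + t ≤ n ∧
    b < |(L (j * D + t : ℕ) : ℝ) - L (j * D : ℕ) - p * t|}

lemma oscillatingPaths_subset_omegaPath (p : ℝ) (n : ℕ) (x y : ℤ) (D : ℕ) (b : ℝ) :
    oscillatingPaths p n x y D b ⊆ OmegaPath 0 n x y :=
  Set.sep_subset _ _

theorem exists_eventually_ncard_oscillatingPaths_le (hp : 0 < p) (M : ℝ) {b η : ℝ} (hb : 0 < b)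
    (hη : 0 < η) :
    ∃ R > 0, ∀ᶠ n : ℕ in atTop, ∀ x y : ℤ, x ≤ y → |(y : ℝ) - x - p * n| ≤ M * √(n : ℝ) →
      (oscillatingPaths p n x y (n / R + 1) (b * √(n : ℝ))).ncard ≤
        η * (OmegaPath 0 n x y).ncard := by
  obtain ⟨R, hR, hbridge⟩ := exists_measureReal_blockExcursion_inter_le hp M hb hη
  refine ⟨R, hR, ?_⟩
  filter_upwards [hbridge] with n hbridge x y hxy hM
  obtain ⟨m, rfl⟩ := Int.le.dest hxy
  have hcount := hbridge m (by simpa using hM)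
  have hsub : pathOf x n ⁻¹' oscillatingPaths p n x (x + m) (n / R + 1) (b * √(n : ℝ)) ⊆
      blockExcursion p n (n / R + 1) (b * √(n : ℝ)) ∩ partialSum n ⁻¹' {m} := by
    rintro ω ⟨hω, j, t, htD, hjt, hlt⟩
    refine ⟨⟨j, t, htD, hjt, ?_⟩, (pathOf_mem_omegaPath_iff ω).mp hω⟩
    rw [pathOf_natCast x hjt, pathOf_natCast x (by lia), partialSum_add] at hlt
    convert hlt using 2
    rw [centeredSum]
    push_cast
    ring
  have := (measureReal_mono hsub (measure_ne_top _ _)).trans hcount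
  rw [measureReal_preimage_pathOf hp (oscillatingPaths_subset_omegaPath ..),
    negBinWeight_eq_ncard_mul_pathWeight hp n x, ← mul_assoc] at this
  exact le_of_mul_le_mul_right this (by unfold pathWeight; positivity)

end Paths

section ModulusOfContinuity

lemma abs_interp_sub_le {F : ℤ → ℝ} {A B : ℤ} {c b : ℝ}
    (hF : ∀ s, A ≤ s → s ≤ B → |F s - c| ≤ b) {u : ℝ} (hAu : A ≤ u) (huB : u ≤ B) :
    |interp F u - c| ≤ b := by
  have hA : A ≤ ⌊u⌋ := Int.le_floor.mpr hAu
  rcases huB.lt_or_eq with huB | rfl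
  · have hB : ⌊u⌋ < B := Int.floor_lt.mpr huB
    have hmem {s : ℤ} (hAs : A ≤ s) (hsB : s ≤ B) : F s ∈ Metric.closedBall c b :=
      Metric.mem_closedBall.mpr (hF s hAs hsB)
    exact (convex_closedBall c b).add_smul_sub_mem (hmem hA hB.le) (hmem (by lia) hB)
      (t := u - ⌊u⌋) ⟨Int.fract_nonneg u, (Int.fract_lt_one u).le⟩
  · simpa [interp] using hF B (by simpa using hA) le_rfl

/-- Two times at distance at most `D` lie in the same block of length `D` or in adjacent ones, and
the oscillation over a block is controlled from its left end point. -/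
lemma abs_interp_sub_interp_le {F : ℤ → ℝ} {n D : ℕ} {b : ℝ} (hD : 0 < D)
    (hF : ∀ j t : ℕ, t ≤ D → j * D + t ≤ n → |F (j * D + t : ℕ) - F (j * D : ℕ)| ≤ b)
    {u v : ℝ} (hu : 0 ≤ u) (huv : u ≤ v) (hvn : v ≤ n) (hvu : v - u ≤ D) :
    |interp F v - interp F u| ≤ 3 * b := by
  have hblock (j : ℕ) {w : ℝ} (hjw : (j * D : ℕ) ≤ w) (hwj : w ≤ (j * D + D : ℕ))
      (hwn : w ≤ n) : |interp F w - F (j * D : ℕ)| ≤ b := by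
    refine abs_interp_sub_le (A := (j * D : ℕ)) (B := (min (j * D + D) n : ℕ))
      (fun s hs hs' => ?_) (by exact_mod_cast hjw) ?_
    · obtain ⟨t, rfl⟩ := Int.le.dest hs
      exact_mod_cast hF j t (by lia) (by lia)
    · rw [Int.cast_natCast, Nat.cast_min]
      exact le_min hwj hwn
  set j := ⌊u⌋₊ / D
  have hju : (j * D : ℕ) ≤ u :=
    (Nat.cast_le.mpr (Nat.div_mul_le_self _ _)).trans (Nat.floor_le hu)
  have huj : u < (j * D + D : ℕ) :=
    (Nat.floor_lt hu).mp (Nat.lt_div_mul_add hD)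
  have hbu := hblock j hju huj.le (huv.trans hvn)
  have hb : 0 ≤ b := (abs_nonneg _).trans hbu
  rcases le_total v (j * D + D : ℕ) with hvj | hjv
  · have hbv := hblock j (hju.trans huv) hvj hvn
    rw [abs_le] at *
    constructor <;> linarith
  · have hnext : j * D + D = (j + 1) * D := by ring
    have hbv := hblock (j + 1) (by rwa [← hnext]) (by
      rw [← hnext, Nat.cast_add]; linarith) hvn
    have hend := hF j D le_rfl (by exact_mod_cast hjv.trans hvn)
    rw [← hnext] at hbv
    rw [abs_le] at *
    constructor <;> linarith

lemma modCont_le {h : ℝ → ℝ} {a b δ ε : ℝ} (hε : 0 ≤ ε)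
    (hosc : ∀ s t, a ≤ s → s ≤ t → t ≤ b → t - s ≤ δ → |h t - h s| ≤ ε) :
    modCont h a b δ ≤ ε := by
  refine Real.sSup_le ?_ hε
  rintro _ ⟨s, hs, t, ht, hst, rfl⟩
  rcases le_total s t with h | h
  · rw [abs_sub_comm]
    exact hosc s t hs.1 h ht.2 (by linarith [neg_le_of_abs_le hst])
  · exact hosc t s ht.1 h hs.2 (by linarith [le_of_abs_le hst])

lemma interpZ_sub_mul (L : ℤ → ℤ) (p w : ℝ) :
    interpZ L w - p * w = interp (fun s => L s - p * s) w := by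
  simp only [interpZ, interp]
  push_cast
  ring

lemma one_div_mul_le_div_add_one {R : ℕ} (hR : 0 < R) (n : ℕ) :
    1 / (R : ℝ) * n ≤ (n / R + 1 : ℕ) := by
  rw [one_div_mul_eq_div, div_le_iff₀' (by exact_mod_cast hR)]
  exact_mod_cast (Nat.lt_mul_div_succ n hR).le

theorem modCont_le_of_notMem_oscillatingPaths {p ε σ δ : ℝ} (hε : 0 ≤ ε) (hσ : 0 < σ)
    {n D : ℕ} (hn : 0 < n) (hD : 0 < D) (hδ : δ * n ≤ D) {x y : ℤ} {L : ℤ → ℤ}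
    (hL : L ∈ OmegaPath 0 n x y) (hosc : L ∉ oscillatingPaths p n x y D (ε * σ / 3 * √(n : ℝ))) :
    modCont (fun t => σ⁻¹ * (√(n : ℝ))⁻¹ * (interpZ L (t * n) - p * t * n)) 0 1 δ ≤
      ε := by
  have : 0 < √(n : ℝ) := Real.sqrt_pos.mpr (by exact_mod_cast hn)
  simp only [oscillatingPaths, Set.mem_ofPred_eq, hL, true_and, not_exists, not_and,
    not_lt] at hosc
  have hblocks (j t : ℕ) (htD : t ≤ D) (hjt : j * D + t ≤ n) :
      |((L (j * D + t : ℕ) : ℝ) - p * ((j * D + t : ℕ) : ℤ)) -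
        (L (j * D : ℕ) - p * ((j * D : ℕ) : ℤ))| ≤
        ε * σ / 3 * √(n : ℝ) := by
    refine (congrArg abs ?_).trans_le (hosc j t htD hjt)
    rw [Int.cast_natCast, Int.cast_natCast, Nat.cast_add (R := ℝ) (j * D) t]
    ring
  refine modCont_le (by positivity) fun s t hs hst ht hts => ?_
  have hlen : t * n - s * n ≤ D := by
    rw [← sub_mul]
    exact (by gcongr : (t - s) * n ≤ δ * n).trans hδ
  have hdist := abs_interp_sub_interp_le (F := fun s => L s - p * s) hD hblocks
    (u := s * n) (v := t * n) (by positivity) (by gcongr)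
    (mul_le_of_le_one_left n.cast_nonneg ht) hlen
  simp only [← interpZ_sub_mul, ← mul_assoc p] at hdist
  rw [← mul_sub, abs_mul, abs_of_pos (by positivity)]
  calc _ ≤ σ⁻¹ * (√(n : ℝ))⁻¹ * (3 * (ε * σ / 3 * √(n : ℝ))) := by gcongr
    _ = ε := by field_simp

end ModulusOfContinuity

section Interlacing

variable {k n : ℕ} {p Mside Mbot Asep Agap Δ : ℝ}

theorem mem_omegaInter_of_forall_mem_pathTube {x y : Fin k → ℤ} {g : ℤ → EReal}
    {φ : Fin k → ℕ → ℝ} {b d : ℝ}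
    (hstep : ∀ i t, φ i (t + 1) - φ i t ≤ d)
    (hsep : ∀ i j : Fin k, (j : ℕ) = i + 1 → ∀ t ≤ n, 2 * b + d ≤ φ i t - φ j t)
    (hfloor : ∀ i : Fin k, (i : ℕ) = k - 1 → ∀ t : ℕ, t ≤ n →
      g t ≤ ((φ i t - (b + d) : ℝ) : EReal))
    {Q : Fin k → ℤ → ℤ} (hQ : ∀ i, Q i ∈ pathTube n (x i) (y i) (φ i) b) :
    Q ∈ OmegaInter 0 n x y (fun _ => (⊤ : EReal)) g := by
  refine ⟨fun i => (hQ i).1.1, fun i => (hQ i).1.2.1, fun i => (hQ i).1.2.2, fun r hr hrn => ?_⟩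
  obtain ⟨t, rfl⟩ := Int.eq_ofNat_of_zero_le (by lia : 0 ≤ r - 1) |>.imp fun _ => eq_add_of_sub_eq
  have htn : t + 1 ≤ n := by exact_mod_cast hrn
  rw [add_sub_cancel_right]
  have hlower (i : Fin k) : φ i (t + 1) - (b + d) ≤ Q i t := by
    linarith [hstep i t, neg_le_of_abs_le ((hQ i).2 t (by lia))]
  refine ⟨fun _ _ => le_top, fun i j hij => ?_, fun i hi => ?_⟩
  · have hupper : (Q j (t + 1) : ℝ) ≤ φ j (t + 1) + b := by
      have := le_of_abs_le ((hQ j).2 (t + 1) htn)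
      push_cast at this
      linarith
    have hgap := hsep i j hij (t + 1) htn
    exact_mod_cast (by linarith [hlower i] : (Q j (t + 1) : ℝ) ≤ Q i t)
  · exact (hfloor i hi (t + 1) htn).trans (EReal.coe_le_coe_iff.mpr (hlower i))

/-- The boundary data of an interlacing ensemble over `⟦0, n⟧` are well separated: the end points
lie within `Mside * √n` of the line of slope `p` and at distance at least `Asep * √n` from each
other, and the floor `g` lies at most `Mbot * √n` above the line and, at the times within `Δ * n` of
the ends, at least `Agap * √n` below the lowest end point. -/
structure WellSeparated (p Mside Mbot Asep Agap Δ : ℝ) (n : ℕ) (x y : Fin k → ℤ)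
    (g : ℤ → EReal) : Prop where
  abs_left_le : ∀ i, |(x i : ℝ)| ≤ Mside * √(n : ℝ)
  abs_right_le : ∀ i, |(y i : ℝ) - p * n| ≤ Mside * √(n : ℝ)
  le_left_sub : ∀ i j : Fin k, (j : ℕ) = i + 1 → Asep * √(n : ℝ) ≤ (x i : ℝ) - x j
  le_right_sub : ∀ i j : Fin k, (j : ℕ) = i + 1 → Asep * √(n : ℝ) ≤ (y i : ℝ) - y j
  floor_le : ∀ s : ℤ, 0 ≤ s → s ≤ n → g s ≤ ((p * s + Mbot * √(n : ℝ) : ℝ) : EReal)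
  floor_le_left : ∀ i : Fin k, (i : ℕ) = k - 1 → ∀ s : ℤ, 0 ≤ s → (s : ℝ) ≤ Δ * n →
    g s ≤ (((x i : ℝ) + p * s - Agap * √(n : ℝ) : ℝ) : EReal)
  floor_le_right : ∀ i : Fin k, (i : ℕ) = k - 1 → ∀ s : ℤ, (n : ℝ) - Δ * n ≤ (s : ℝ) → s ≤ n →
    g s ≤ (((y i : ℝ) - p * n + p * s - Agap * √(n : ℝ) : ℝ) : EReal)

/-- The straight line from `(0, x)` to `(n, y)`, raised by `B * √n` times the tent function of
`t / n` so as to clear the floor. -/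
noncomputable def archCurve (p B : ℝ) (n : ℕ) (x y : ℝ) (t : ℕ) : ℝ :=
  p * t + (x + t / n * (y - p * n - x)) + B * √(n : ℝ) * min (t / n : ℝ) (1 - t / n)

lemma archCurve_zero (p B : ℝ) (n : ℕ) (x y : ℝ) : archCurve p B n x y 0 = x := by
  simp [archCurve]

lemma archCurve_self (p B : ℝ) (hn : 0 < n) (x y : ℝ) : archCurve p B n x y n = y := by
  have : (n : ℝ) ≠ 0 := by exact_mod_cast hn.ne'
  simp [archCurve, this]

lemma abs_min_one_sub_add_sub_le (a : ℝ) {d : ℝ} (hd : 0 ≤ d) :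
    |min (a + d) (1 - (a + d)) - min a (1 - a)| ≤ d := by
  refine (abs_min_sub_min_le_max _ _ _ _).trans_eq ?_
  rw [add_sub_cancel_left, sub_sub_sub_cancel_left, sub_add_cancel_left, abs_neg, max_self,
    abs_of_nonneg hd]

lemma abs_archCurve_add_sub_le {B : ℝ} (hB : 0 ≤ B) (hn : 0 < n) {x y : ℝ}
    (hx : |x| ≤ Mside * √(n : ℝ)) (hy : |y - p * n| ≤ Mside * √(n : ℝ)) (u v : ℕ) :
    |archCurve p B n x y (u + v) - archCurve p B n x y u - p * v| ≤
      (2 * Mside + B) * v / √(n : ℝ) := by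
  have hsqrt : √(n : ℝ) * √(n : ℝ) = n := Real.mul_self_sqrt n.cast_nonneg
  have : (0 : ℝ) < n := by exact_mod_cast hn
  have hslope : |y - p * n - x| ≤ 2 * Mside * √(n : ℝ) := by
    linarith [abs_sub (y - p * n) x]
  have htent := abs_min_one_sub_add_sub_le (u / n : ℝ) (by positivity : (0 : ℝ) ≤ v / n)
  calc _ = |v / n * (y - p * n - x) + B * √(n : ℝ) *
        (min (u / n + v / n : ℝ) (1 - (u / n + v / n)) - min (u / n : ℝ) (1 - u / n))| := by
        simp only [archCurve, Nat.cast_add, add_div]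
        ring_nf
    _ ≤ v / n * (2 * Mside * √(n : ℝ)) + B * √(n : ℝ) * (v / n) := by
        refine (abs_add_le _ _).trans ?_
        rw [abs_mul, abs_mul, abs_of_nonneg (by positivity : (0 : ℝ) ≤ v / n),
          abs_of_nonneg (by positivity : 0 ≤ B * √(n : ℝ))]
        gcongr
    _ = (2 * Mside + B) * v / √(n : ℝ) := by
        rw [(by rw [div_div, hsqrt] : (v / n : ℝ) = v / √(n : ℝ) / √(n : ℝ))]
        field_simp

lemma le_archCurve_sub_archCurve {B A x y x' y' : ℝ} (hn : 0 < n) (hx : A ≤ x - x')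
    (hy : A ≤ y - y') {t : ℕ} (ht : t ≤ n) :
    A ≤ archCurve p B n x y t - archCurve p B n x' y' t := by
  have hτ : (t / n : ℝ) ≤ 1 := (div_le_one (by exact_mod_cast hn)).mpr (by exact_mod_cast ht)
  calc A = (1 - t / n) * A + t / n * A := by ring
    _ ≤ (1 - t / n) * (x - x') + t / n * (y - y') := by gcongr
    _ = _ := by simp only [archCurve]; ring

lemma le_archCurve_of_le_half {B x y : ℝ} (hx : |x| ≤ Mside * √(n : ℝ))
    (hy : |y - p * n| ≤ Mside * √(n : ℝ)) (hB : 2 * Mside ≤ B) {t : ℕ}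
    (ht : (t / n : ℝ) ≤ 1 / 2) : x + p * t ≤ archCurve p B n x y t := by
  have hslope : 0 ≤ y - p * n - x + B * √(n : ℝ) := by
    have : 2 * Mside * √(n : ℝ) ≤ B * √(n : ℝ) := by gcongr
    linarith [neg_le_of_abs_le hy, le_of_abs_le hx]
  rw [archCurve, min_eq_left (by linarith)]
  linarith [mul_nonneg (by positivity : (0 : ℝ) ≤ t / n) hslope]

lemma le_archCurve_of_half_le {B x y : ℝ} (hx : |x| ≤ Mside * √(n : ℝ))
    (hy : |y - p * n| ≤ Mside * √(n : ℝ)) (hB : 2 * Mside ≤ B) {t : ℕ}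
    (ht : 1 / 2 ≤ (t / n : ℝ)) (htn : (t / n : ℝ) ≤ 1) :
    y - p * n + p * t ≤ archCurve p B n x y t := by
  have hslope : 0 ≤ x - (y - p * n) + B * √(n : ℝ) := by
    have : 2 * Mside * √(n : ℝ) ≤ B * √(n : ℝ) := by gcongr
    linarith [le_of_abs_le hy, neg_le_of_abs_le hx]
  rw [archCurve, min_eq_right (by linarith)]
  linarith [mul_nonneg (sub_nonneg.mpr htn) hslope]

lemma le_archCurve_of_mem_Icc {B x y : ℝ} (hB : 0 ≤ B) (hx : |x| ≤ Mside * √(n : ℝ))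
    (hy : |y - p * n| ≤ Mside * √(n : ℝ)) {t : ℕ} (htn : (t / n : ℝ) ≤ 1)
    (ht : (t / n : ℝ) ∈ Set.Icc Δ (1 - Δ)) :
    p * t + (B * Δ - Mside) * √(n : ℝ) ≤ archCurve p B n x y t := by
  have htent : B * √(n : ℝ) * Δ ≤ B * √(n : ℝ) * min (t / n : ℝ) (1 - t / n) := by
    gcongr
    exact le_min ht.1 (by linarith [ht.2])
  have hline : -(Mside * √(n : ℝ)) ≤ (1 - t / n) * x + t / n * (y - p * n) := by
    calc -(Mside * √(n : ℝ))
        = (1 - t / n) * -(Mside * √(n : ℝ)) + t / n * -(Mside * √(n : ℝ)) := by ring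
      _ ≤ _ := by
        have := sub_nonneg.mpr htn
        gcongr
        exacts [neg_le_of_abs_le hx, neg_le_of_abs_le hy]
  rw [archCurve]
  linarith

/-- The height of the arch that clears a floor satisfying the bounds of `WellSeparated`. -/
noncomputable def archHeight (Mside Mbot Agap Δ : ℝ) : ℝ :=
  2 * Mside + (Mside + Mbot + Agap) / Δ

lemma WellSeparated.floor_le_archCurve {x y : Fin k → ℤ} {g : ℤ → EReal}
    (hsep : WellSeparated p Mside Mbot Asep Agap Δ n x y g) (hMside : 0 ≤ Mside)
    (hMbot : 0 ≤ Mbot) (hAgap : 0 ≤ Agap) (hΔ : 0 < Δ) (hΔ' : Δ ≤ 1 / 2) (hn : 0 < n)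
    {i : Fin k} (hi : (i : ℕ) = k - 1) {t : ℕ} (ht : t ≤ n) :
    g t ≤ ((archCurve p (archHeight Mside Mbot Agap Δ) n (x i) (y i) t -
      Agap * √(n : ℝ) : ℝ) : EReal) := by
  have hn' : (0 : ℝ) < n := by exact_mod_cast hn
  have htn : (t / n : ℝ) ≤ 1 := (div_le_one hn').mpr (by exact_mod_cast ht)
  have hx := hsep.abs_left_le i
  have hy := hsep.abs_right_le i
  have hB : 2 * Mside ≤ archHeight Mside Mbot Agap Δ :=
    le_add_of_nonneg_right (by positivity)
  rcases le_total (t / n : ℝ) Δ with hleft | hleft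
  · refine (hsep.floor_le_left i hi t (by positivity) ?_).trans (EReal.coe_le_coe_iff.mpr ?_)
    · exact_mod_cast (div_le_iff₀ hn').mp hleft
    · exact sub_le_sub_right (mod_cast le_archCurve_of_le_half hx hy hB (hleft.trans hΔ')) _
  rcases le_total (1 - Δ) (t / n : ℝ) with hright | hright
  · refine (hsep.floor_le_right i hi t ?_ (by exact_mod_cast ht)).trans
      (EReal.coe_le_coe_iff.mpr ?_)
    · rw [le_div_iff₀ hn', sub_mul, one_mul] at hright
      exact_mod_cast hright
    · exact sub_le_sub_right
        (mod_cast le_archCurve_of_half_le hx hy hB (by linarith) htn) _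
  · refine (hsep.floor_le t (by positivity) (by exact_mod_cast ht)).trans
      (EReal.coe_le_coe_iff.mpr ?_)
    have hmid := le_archCurve_of_mem_Icc (by linarith) hx hy htn ⟨hleft, hright⟩
    have hclear : Mbot + Agap ≤ archHeight Mside Mbot Agap Δ * Δ - Mside := by
      rw [archHeight, add_mul, div_mul_cancel₀ _ hΔ.ne']
      linarith [mul_nonneg hMside hΔ.le]
    have hscaled := mul_le_mul_of_nonneg_right hclear (Real.sqrt_nonneg n)
    rw [Int.cast_natCast]
    linarith

lemma archHeight_nonneg (hMside : 0 ≤ Mside) (hMbot : 0 ≤ Mbot) (hAgap : 0 ≤ Agap)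
    (hΔ : 0 ≤ Δ) : 0 ≤ archHeight Mside Mbot Agap Δ := by
  unfold archHeight
  positivity

theorem WellSeparated.pi_pathTube_subset_omegaInter {x y : Fin k → ℤ} {g : ℤ → EReal}
    (hsep : WellSeparated p Mside Mbot Asep Agap Δ n x y g) (hMside : 0 ≤ Mside)
    (hMbot : 0 ≤ Mbot) (hAgap : 0 ≤ Agap) (hΔ : 0 < Δ) (hΔ' : Δ ≤ 1 / 2) (hn : 0 < n) {a : ℝ}
    (haA : 3 * a ≤ Asep) (haG : 2 * a ≤ Agap)
    (ha : p + (2 * Mside + archHeight Mside Mbot Agap Δ) ≤ a * √(n : ℝ)) :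
    (Set.univ.pi fun i => pathTube n (x i) (y i)
      (archCurve p (archHeight Mside Mbot Agap Δ) n (x i) (y i)) (a * √(n : ℝ))) ⊆
      OmegaInter 0 n x y (fun _ => (⊤ : EReal)) g := by
  have hB := archHeight_nonneg hMside hMbot hAgap hΔ.le
  have hone : 1 ≤ √(n : ℝ) := Real.one_le_sqrt.mpr (by exact_mod_cast hn)
  refine fun Q hQ => mem_omegaInter_of_forall_mem_pathTube (d := a * √(n : ℝ))
    (fun i t => ?_) (fun i j hij t ht => ?_) (fun i hi t ht => ?_) fun i => hQ i (Set.mem_univ i)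
  · have hlip := le_of_abs_le
      (abs_archCurve_add_sub_le hB hn (hsep.abs_left_le i) (hsep.abs_right_le i) t 1)
    have hdiv : (2 * Mside + archHeight Mside Mbot Agap Δ) / √(n : ℝ) ≤
        2 * Mside + archHeight Mside Mbot Agap Δ := div_le_self (by positivity) hone
    rw [Nat.cast_one, mul_one, mul_one] at hlip
    linarith
  · have hA : 3 * a * √(n : ℝ) ≤ Asep * √(n : ℝ) := by gcongr
    have := le_archCurve_sub_archCurve (p := p) (B := archHeight Mside Mbot Agap Δ) hn
      (hsep.le_left_sub i j hij) (y := y i) (y' := y j) (hsep.le_right_sub i j hij) ht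
    linarith
  · refine (hsep.floor_le_archCurve hMside hMbot hAgap hΔ hΔ' hn hi ht).trans
      (EReal.coe_le_coe_iff.mpr ?_)
    have hG : 2 * a * √(n : ℝ) ≤ Agap * √(n : ℝ) := by gcongr
    linarith

end Interlacing

section Counting

lemma ncard_univ_pi {ι : Type*} [Fintype ι] {α : ι → Type*} (s : ∀ i, Set (α i)) :
    (Set.univ.pi s).ncard = ∏ i, (s i).ncard := by
  simp only [← Nat.card_coe_set_eq, ← Nat.card_pi]
  exact Nat.card_congr (Equiv.Set.univPi s)

lemma ncard_setOf_mem_le {ι α : Type*} [Fintype ι] {S : Set (ι → α)} {T : ι → Set α}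
    {i : ι} {E : Set α} {c η : ℝ} (hη : 0 ≤ η) (hT : ∀ j, (T j).Finite)
    (hST : S ⊆ Set.univ.pi T) (hE : E ⊆ T i) (hcard : c * ∏ j, ((T j).ncard : ℝ) ≤ S.ncard)
    (hEcard : (E.ncard : ℝ) ≤ η * c * (T i).ncard) :
    ({q ∈ S | q i ∈ E}.ncard : ℝ) ≤ η * S.ncard := by
  classical
  have hsub : {q ∈ S | q i ∈ E} ⊆ Set.univ.pi (Function.update T i E) :=
    fun q ⟨hq, hqi⟩ j _ => (Function.forall_update_iff T fun j A => q j ∈ A).mpr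
      ⟨hqi, fun j _ => hST hq j (Set.mem_univ j)⟩ j
  have hfin : (Set.univ.pi (Function.update T i E)).Finite :=
    Set.Finite.pi <| (Function.forall_update_iff T fun _ A => A.Finite).mpr
      ⟨(hT i).subset hE, fun j _ => hT j⟩
  have hprod := Finset.mul_prod_erase Finset.univ (fun j => ((T j).ncard : ℝ)) (Finset.mem_univ i)
  calc ({q ∈ S | q i ∈ E}.ncard : ℝ)
      ≤ (Set.univ.pi (Function.update T i E)).ncard := by
        exact_mod_cast Set.ncard_le_ncard hsub hfin
    _ = E.ncard * ∏ j ∈ Finset.univ.erase i, ((T j).ncard : ℝ) := by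
        rw [ncard_univ_pi, Nat.cast_prod, ← Finset.mul_prod_erase _ _ (Finset.mem_univ i),
          Function.update_self]
        congr 1
        refine Finset.prod_congr rfl fun j hj => ?_
        rw [Function.update_of_ne (Finset.ne_of_mem_erase hj)]
    _ ≤ η * c * (T i).ncard * ∏ j ∈ Finset.univ.erase i, ((T j).ncard : ℝ) := by gcongr
    _ = η * (c * ∏ j, ((T j).ncard : ℝ)) := by rw [← hprod]; ring
    _ ≤ η * S.ncard := by gcongr

lemma UniformOn.measure_le_ofReal {Ω E : Type*} [MeasurableSpace Ω] {P : Measure Ω} {X : Ω → E}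
    {S F : Set E} (hX : UniformOn P X S) (hS : S.Finite) (hne : S.Nonempty) (hFS : F ⊆ S) {r : ℝ}
    (hcard : (F.ncard : ℝ) ≤ r * S.ncard) : P (X ⁻¹' F) ≤ ENNReal.ofReal r := by
  have hpos : (0 : ℝ) < S.ncard := by exact_mod_cast (Set.ncard_pos hS).mpr hne
  have hF := hS.subset hFS
  lift F to Finset E using hF
  calc P (X ⁻¹' F) = P (⋃ q ∈ F, {ω | X ω = q}) := by
        congr 1
        ext ω
        simp
    _ ≤ ∑ q ∈ F, P {ω | X ω = q} := measure_biUnion_finset_le _ _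
    _ = F.card * (S.ncard : ℝ≥0∞)⁻¹ := by
        rw [Finset.sum_congr rfl fun q hq => hX.2 q (hFS hq), Finset.sum_const, nsmul_eq_mul,
          Nat.card_coe_set_eq]
    _ = ENNReal.ofReal (F.card / S.ncard) := by
        rw [ENNReal.ofReal_div_of_pos hpos, ENNReal.ofReal_natCast, ENNReal.ofReal_natCast,
          div_eq_mul_inv]
    _ ≤ ENNReal.ofReal r := by
        rw [Set.ncard_coe_finset] at hcard
        exact ENNReal.ofReal_le_ofReal ((div_le_iff₀ hpos).mpr hcard)

end Counting

section Ensembles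

variable {k n : ℕ} {x y : Fin k → ℤ} {g : ℤ → EReal}

lemma omegaInter_subset_pi_omegaPath (n : ℕ) (x y : Fin k → ℤ) (f g : ℤ → EReal) :
    OmegaInter 0 n x y f g ⊆ Set.univ.pi fun i => OmegaPath 0 n (x i) (y i) :=
  fun _ hQ i _ => ⟨hQ.1 i, hQ.2.1 i, hQ.2.2.1 i⟩

lemma le_of_mem_omegaPath {x y : ℤ} {L : ℤ → ℤ} (hL : L ∈ OmegaPath 0 n x y) : x ≤ y := by
  obtain ⟨hincr, rfl, rfl⟩ := hL
  have := add_partialSum_increments hincr le_rfl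
  lia

lemma le_of_omegaInter_nonempty {f : ℤ → EReal} (hne : (OmegaInter 0 n x y f g).Nonempty)
    (i : Fin k) : x i ≤ y i :=
  have ⟨_, hQ⟩ := hne
  le_of_mem_omegaPath (omegaInter_subset_pi_omegaPath n x y f g hQ i (Set.mem_univ i))

lemma finite_omegaPath_of_le {x y : ℤ} (n : ℕ) (hxy : x ≤ y) : (OmegaPath 0 n x y).Finite := by
  obtain ⟨m, rfl⟩ := Int.le.dest hxy
  exact finite_omegaPath n x m

lemma finite_omegaInter (n : ℕ) (hxy : ∀ i, x i ≤ y i) (f g : ℤ → EReal) :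
    (OmegaInter 0 n x y f g).Finite :=
  (Set.Finite.pi fun i => finite_omegaPath_of_le n (hxy i)).subset
    (omegaInter_subset_pi_omegaPath n x y f g)

theorem exists_eventually_mul_prod_ncard_omegaPath_le_ncard_omegaInter
    {p Mside Mbot Asep Agap Δ : ℝ} (hp : 0 < p) (hMside : 0 ≤ Mside) (hMbot : 0 ≤ Mbot)
    (hAsep : 0 < Asep) (hAgap : 0 < Agap) (hΔ : 0 < Δ) (hΔ' : Δ ≤ 1 / 2) (k : ℕ) :
    ∃ c > (0 : ℝ), ∀ᶠ n : ℕ in atTop, ∀ (x y : Fin k → ℤ) (g : ℤ → EReal),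
      WellSeparated p Mside Mbot Asep Agap Δ n x y g → (∀ i, x i ≤ y i) →
      c * ∏ i, ((OmegaPath 0 n (x i) (y i)).ncard : ℝ) ≤
        (OmegaInter 0 n x y (fun _ => (⊤ : EReal)) g).ncard := by
  set B := archHeight Mside Mbot Agap Δ
  have hB : 0 ≤ B := archHeight_nonneg hMside hMbot hAgap.le hΔ.le
  set a := min Asep Agap / 3 with ha_def
  have ha : 0 < a := by positivity
  have haA : 3 * a ≤ Asep := by linarith [min_le_left Asep Agap]
  have haG : 2 * a ≤ Agap := by linarith [min_le_right Asep Agap]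
  obtain ⟨c, hc, htube⟩ := exists_eventually_mul_ncard_omegaPath_le_ncard_pathTube hp
    (by positivity : 0 ≤ 2 * Mside + B) ha
  refine ⟨c ^ k, by positivity, ?_⟩
  filter_upwards [htube, eventually_gt_atTop 0,
    eventually_le_sqrt_natCast ((p + (2 * Mside + B)) / a)] with n htube hn hlarge x y g hsep hxy
  rw [div_le_iff₀' ha] at hlarge
  have hsub := hsep.pi_pathTube_subset_omegaInter hMside hMbot hAgap.le hΔ hΔ' hn haA haG hlarge
  calc c ^ k * ∏ i, ((OmegaPath 0 n (x i) (y i)).ncard : ℝ)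
      = ∏ i, c * ((OmegaPath 0 n (x i) (y i)).ncard : ℝ) := by
        rw [Finset.prod_mul_distrib, Finset.prod_const, Finset.card_univ, Fintype.card_fin]
    _ ≤ ∏ i, ((pathTube n (x i) (y i) (archCurve p B n (x i) (y i))
          (a * √(n : ℝ))).ncard : ℝ) := by
        gcongr with i
        exact htube (x i) (y i) (hxy i) _ (archCurve_zero ..) (archCurve_self p B hn _ _)
          (abs_archCurve_add_sub_le hB hn (hsep.abs_left_le i) (hsep.abs_right_le i))
    _ ≤ _ := by
        rw [← Nat.cast_prod, ← ncard_univ_pi]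
        exact_mod_cast Set.ncard_le_ncard hsub (finite_omegaInter n hxy _ _)

theorem exists_eventually_ncard_setOf_mem_oscillatingPaths_le
    {p Mside Mbot Asep Agap Δ b η : ℝ} (hp : 0 < p) (hMside : 0 ≤ Mside) (hMbot : 0 ≤ Mbot)
    (hAsep : 0 < Asep) (hAgap : 0 < Agap) (hΔ : 0 < Δ) (hΔ' : Δ ≤ 1 / 2) (k : ℕ) (hb : 0 < b)
    (hη : 0 < η) :
    ∃ R > 0, ∀ᶠ n : ℕ in atTop, ∀ (x y : Fin k → ℤ) (g : ℤ → EReal),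
      WellSeparated p Mside Mbot Asep Agap Δ n x y g → (∀ i, x i ≤ y i) → ∀ i,
      ({Q ∈ OmegaInter 0 n x y (fun _ => (⊤ : EReal)) g |
        Q i ∈ oscillatingPaths p n (x i) (y i) (n / R + 1) (b * √(n : ℝ))}.ncard : ℝ) ≤
        η * (OmegaInter 0 n x y (fun _ => (⊤ : EReal)) g).ncard := by
  obtain ⟨c, hc, hinter⟩ := exists_eventually_mul_prod_ncard_omegaPath_le_ncard_omegaInter hp
    hMside hMbot hAsep hAgap hΔ hΔ' k
  obtain ⟨R, hR, hosc⟩ := exists_eventually_ncard_oscillatingPaths_le hp (2 * Mside) hb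
    (mul_pos hη hc)
  refine ⟨R, hR, ?_⟩
  filter_upwards [hinter, hosc] with n hinter hosc x y g hsep hxy i
  refine ncard_setOf_mem_le hη.le (fun j => finite_omegaPath_of_le n (hxy j))
    (omegaInter_subset_pi_omegaPath n x y _ g) (oscillatingPaths_subset_omegaPath ..)
    (hinter x y g hsep hxy) (hosc (x i) (y i) (hxy i) ?_)
  have := hsep.abs_left_le i
  have := hsep.abs_right_le i
  rw [sub_right_comm]
  linarith [abs_sub ((y i : ℝ) - p * n) (x i)]

end Ensembles

/-- (Lemma 4.3, modulus of continuity for several interlacing curves.) If the boundary data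
of an interlacing ensemble is well-behaved and well-separated, every rescaled curve has a
well-behaved modulus of continuity. -/
theorem modulus_several_curves
    (p ε η Mbot Mside Asep Agap : ℝ)
    (hp : 0 < p) (hε : 0 < ε) (hη : 0 < η) (hMbot : 0 < Mbot) (hMside : 0 < Mside)
    (hAsep : 0 < Asep) (hAgap : 0 < Agap)
    (Δgap : ℝ) (hΔgap : Δgap ∈ Set.Ioo (0 : ℝ) (1 / 2)) (k : ℕ) (hk : 0 < k) :
    ∃ (N6 : ℕ) (δ : ℝ), 0 < δ ∧
      ∀ n : ℕ, N6 ≤ n →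
      ∀ x y : Fin k → ℤ,
        (∀ i j : Fin k, i ≤ j → x j ≤ x i) → (∀ i j : Fin k, i ≤ j → y j ≤ y i) →
        (∀ i, |(x i : ℝ)| ≤ Mside * Real.sqrt n) →
        (∀ i, |(y i : ℝ) - p * n| ≤ Mside * Real.sqrt n) →
        (∀ i j : Fin k, (j : ℕ) = (i : ℕ) + 1 → Asep * Real.sqrt n ≤ (x i : ℝ) - x j) →
        (∀ i j : Fin k, (j : ℕ) = (i : ℕ) + 1 → Asep * Real.sqrt n ≤ (y i : ℝ) - y j) →
      ∀ g : ℤ → EReal, (∀ s : ℤ, 0 ≤ s → s ≤ n → g s ≠ ⊤) →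
        (∀ s : ℤ, 0 ≤ s → s ≤ n →
          g s ≤ ((p * s + Mbot * Real.sqrt n : ℝ) : EReal)) →
        (∀ s : ℤ, 0 ≤ s → (s : ℝ) ≤ Δgap * n →
          g s ≤ (((x ⟨k - 1, Nat.sub_lt hk Nat.one_pos⟩ : ℝ)
            + p * s - Agap * Real.sqrt n : ℝ) : EReal)) →
        (∀ s : ℤ, (n : ℝ) - Δgap * n ≤ (s : ℝ) → s ≤ n →
          g s ≤ (((y ⟨k - 1, Nat.sub_lt hk Nat.one_pos⟩ : ℝ) - p * n
            + p * s - Agap * Real.sqrt n : ℝ) : EReal)) →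
        (OmegaInter 0 n x y (fun _ => (⊤ : EReal)) g).Nonempty →
      ∀ (Ω : Type) (_ : MeasurableSpace Ω) (P : Measure Ω), IsProbabilityMeasure P →
      ∀ Q : Ω → Fin k → ℤ → ℤ,
        UniformOn P Q (OmegaInter 0 n x y (fun _ => (⊤ : EReal)) g) →
      ∀ i : Fin k,
        P {ω | ε < modCont (fun t => (Real.sqrt (p * (1 + p)))⁻¹ * (Real.sqrt n)⁻¹ *
            (interpZ (Q ω i) (t * n) - p * t * n)) 0 1 δ} < ENNReal.ofReal η := by
  have hσ : 0 < √(p * (1 + p)) := Real.sqrt_pos.mpr (by positivity)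
  obtain ⟨R, hR, hcount⟩ := exists_eventually_ncard_setOf_mem_oscillatingPaths_le hp hMside.le
    hMbot.le hAsep hAgap hΔgap.1 hΔgap.2.le k (by positivity : 0 < ε * √(p * (1 + p)) / 3)
    (half_pos hη)
  obtain ⟨N6, hN6⟩ := eventually_atTop.mp (hcount.and (eventually_gt_atTop 0))
  refine ⟨N6, 1 / R, by positivity, fun n hn x y _ _ hx hy hxsep hysep g _ hfloor hfloorx hfloory
    hne Ω _ P _ Q hQ i => ?_⟩
  obtain ⟨hcard, hn⟩ := hN6 n hn
  have hxy := le_of_omegaInter_nonempty hne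
  have hsep : WellSeparated p Mside Mbot Asep Agap Δgap n x y g :=
    ⟨hx, hy, hxsep, hysep, hfloor,
      fun j hj => (Fin.ext hj : j = ⟨k - 1, Nat.sub_lt hk Nat.one_pos⟩) ▸ hfloorx,
      fun j hj => (Fin.ext hj : j = ⟨k - 1, Nat.sub_lt hk Nat.one_pos⟩) ▸ hfloory⟩
  calc _ ≤ P (Q ⁻¹' {q ∈ OmegaInter 0 n x y (fun _ => (⊤ : EReal)) g | q i ∈
        oscillatingPaths p n (x i) (y i) (n / R + 1) (ε * √(p * (1 + p)) / 3 * √(n : ℝ))}) := by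
        refine measure_mono fun ω hω => ⟨hQ.1 ω, by_contra fun hosc =>
          not_le.mpr (Set.mem_ofPred_eq ▸ hω) ?_⟩
        exact modCont_le_of_notMem_oscillatingPaths hε.le hσ hn (Nat.succ_pos _)
          (one_div_mul_le_div_add_one hR n)
          (omegaInter_subset_pi_omegaPath n x y _ g (hQ.1 ω) i (Set.mem_univ i)) hosc
    _ ≤ ENNReal.ofReal (η / 2) := hQ.measure_le_ofReal (finite_omegaInter n hxy _ g) hne
        (Set.sep_subset _ _) (hcard x y g hsep hxy i)
    _ < ENNReal.ofReal η := (ENNReal.ofReal_lt_ofReal_iff hη).mpr (half_lt_self hη)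
end

section
/- (Maximal interlacing configuration; Step 1 of the proof of Lemma 2.6.) Let k ∈ ℕ, T0 < T1 be integers, x⃗, y⃗ ∈ 𝔚_k, and g : ⟦T0,T1⟧ → [−∞,∞), and assume Ω_Inter(T0,T1,x⃗,y⃗,∞,g) ≠ ∅. Define Q_i^max(T0 + s) = min(x_{i−s}, y_i) for s ∈ ⟦0, T1−T0⟧ and i ∈ ⟦1,k⟧, with the convention x_m = +∞ for m ≤ 0 (so Q_i^max(T0+s) = y_i when s ≥ i). Then 𝔔^max = (Q_1^max, …, Q_k^max) ∈ Ω_Inter(T0,T1,x⃗,y⃗,∞,g), and for every 𝔔 = (Q_1,…,Q_k) ∈ Ω_Inter(T0,T1,x⃗,y⃗,∞,g) one has Q_i(s) ≤ Q_i^max(s) for all i ∈ ⟦1,k⟧ and s ∈ ⟦T0,T1⟧. -/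
open MeasureTheory Filter Topology ProbabilityTheory
open scoped ENNReal NNReal

/-- The maximal interlacing configuration: `Q_i^max(T0+s) = min (x_{i-s}) (y_i)`, with the
convention `x_m = +∞` for `m ≤ 0`, defined on all of `ℤ` by clamping `s` to `⟦0, T1-T0⟧`. -/
def Qmax (T0 T1 : ℤ) {k : ℕ} (x y : Fin k → ℤ) (i : Fin k) (t : ℤ) : ℤ :=
  if max 0 (min (t - T0) (T1 - T0)) ≤ (i : ℤ) then
    min (x ⟨(i : ℕ) - (max 0 (min (t - T0) (T1 - T0))).toNat,
      Nat.lt_of_le_of_lt (Nat.sub_le _ _) i.isLt⟩) (y i)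
  else y i

/-!
An interlacing path satisfies `Q_i(t) ≤ Q_{i-1}(t - 1) ≤ ⋯ ≤ Q_{i-s}(t - s)`. Running this
diagonal back to time `T0` bounds `Q_i(T0 + s)` by `x_{i-s}`, and monotonicity bounds it by `y_i`;
`Qmax` is the minimum of the two. `Qmax` itself satisfies these constraints because `x` and `y`
are ordered, and any given configuration, lying below it, transfers to it the remaining lower
bounds: those by `g` and those at the endpoints.
-/

section Path

variable {T0 T1 : ℤ} {L M : ℤ → ℤ}

theorem IncrPath.monotone (hL : IncrPath T0 T1 L) : Monotone L := by
  obtain ⟨hstep, hleft, hright⟩ := hL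
  refine monotone_int_of_le_succ fun t => ?_
  rcases lt_or_ge t T0 with h0 | h0
  · rw [hleft t h0.le, hleft (t + 1) h0]
  rcases lt_or_ge t T1 with h1 | h1
  · exact hstep t h0 h1
  · rw [hright t h1, hright (t + 1) (by omega)]

theorem IncrPath.le_of_le_on_Icc (hT : T0 ≤ T1) (hL : IncrPath T0 T1 L) (hM : IncrPath T0 T1 M)
    (hLM : ∀ t ∈ Set.Icc T0 T1, L t ≤ M t) : L ≤ M := by
  intro t
  rcases le_total t T0 with h0 | h0
  · rw [hL.2.1 t h0, hM.2.1 t h0]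
    exact hLM T0 (Set.left_mem_Icc.2 hT)
  rcases le_total t T1 with h1 | h1
  · exact hLM t ⟨h0, h1⟩
  · rw [hL.2.2 t h1, hM.2.2 t h1]
    exact hLM T1 (Set.right_mem_Icc.2 hT)

end Path

section Configuration

variable {T0 T1 t : ℤ} {k : ℕ} {x y : Fin k → ℤ} {f g : ℤ → EReal} {Q : Fin k → ℤ → ℤ}
  {i j : Fin k}

theorem OmegaInter.antitone_apply (hT : T0 < T1) (hQ : Q ∈ OmegaInter T0 T1 x y f g)
    (ht : t ∈ Set.Icc T0 T1) : Antitone fun i => Q i t := by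
  obtain ⟨hincr, -, -, hinter⟩ := hQ
  refine (antitone_iff_forall_covBy _).2 fun i j hij => ?_
  have hsucc : (j : ℕ) = i + 1 := (Order.covBy_iff_add_one_eq.1 (Fin.covBy_iff.1 hij)).symm
  -- Interlacing bounds `Q j t` itself only when `T0 < t`, so at `t = T0` use the next time.
  set r := max t (T0 + 1)
  calc Q j t ≤ Q j r := (hincr j).monotone (le_max_left _ _)
    _ ≤ Q i (r - 1) := (hinter r (by omega) (max_le ht.2 hT)).2.1 i j hsucc
    _ ≤ Q i t := (hincr i).monotone (by have := ht.1; omega)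

theorem OmegaInter.antitone_entrance (hT : T0 < T1) (hQ : Q ∈ OmegaInter T0 T1 x y f g) :
    Antitone x := by
  simpa only [hQ.2.1] using antitone_apply hT hQ (Set.left_mem_Icc.2 hT.le)

theorem OmegaInter.antitone_exit (hT : T0 < T1) (hQ : Q ∈ OmegaInter T0 T1 x y f g) :
    Antitone y := by
  simpa only [hQ.2.2.1] using antitone_apply hT hQ (Set.right_mem_Icc.2 hT.le)

theorem OmegaInter.apply_add_le_apply (hQ : Q ∈ OmegaInter T0 T1 x y f g) (ht : T0 ≤ t) {n : ℕ}
    (hn : t + n ≤ T1) (hij : (j : ℕ) + n = i) : Q i (t + n) ≤ Q j t := by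
  induction n generalizing i with
  | zero => simp [Fin.ext hij]
  | succ n ih =>
    push_cast at hn
    let l : Fin k := ⟨j + n, by omega⟩
    have hstep : Q i (t + (n + 1 : ℕ)) ≤ Q l (t + (n + 1 : ℕ) - 1) :=
      (hQ.2.2.2 _ (by omega) (by omega)).2.1 l i hij.symm
    calc Q i (t + (n + 1 : ℕ)) ≤ Q l (t + n) := by simpa [← add_assoc] using hstep
      _ ≤ Q j t := ih (by omega) rfl

theorem le_Qmax_iff (ht : t ∈ Set.Icc T0 T1) {z : ℤ} :
    z ≤ Qmax T0 T1 x y i t ↔ z ≤ y i ∧ ∀ j : Fin k, (j : ℤ) + (t - T0) = i → z ≤ x j := by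
  obtain ⟨h0, h1⟩ := ht
  have hclamp : max 0 (min (t - T0) (T1 - T0)) = t - T0 := by omega
  simp only [Qmax, hclamp]
  split_ifs with hi
  · rw [le_min_iff, and_comm]
    refine and_congr_right fun _ => ⟨fun hz j hj => ?_, fun hz => hz _ (by grind)⟩
    exact hz.trans_eq (congrArg x (Fin.ext (by grind)))
  · exact ⟨fun hz => ⟨hz, fun j hj => by omega⟩, And.left⟩

theorem Qmax_le_exit : Qmax T0 T1 x y i t ≤ y i := by
  unfold Qmax
  split_ifs
  · exact min_le_right _ _
  · exact le_rfl

theorem Qmax_le_entrance (ht : t ∈ Set.Icc T0 T1) (hij : (j : ℤ) + (t - T0) = i) :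
    Qmax T0 T1 x y i t ≤ x j :=
  ((le_Qmax_iff ht).1 le_rfl).2 j hij

theorem incrPath_Qmax (hx : Antitone x) (i : Fin k) : IncrPath T0 T1 (Qmax T0 T1 x y i) := by
  refine ⟨fun t h0 h1 => ?_, fun t ht => ?_, fun t ht => ?_⟩
  · refine (le_Qmax_iff ⟨by omega, h1⟩).2 ⟨Qmax_le_exit, fun j hj => ?_⟩
    let l : Fin k := ⟨j + 1, by omega⟩
    calc Qmax T0 T1 x y i t ≤ x l := Qmax_le_entrance ⟨h0, h1.le⟩ (by simp only [l]; omega)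
      _ ≤ x j := hx (Fin.le_def.2 (Nat.le_succ j))
  · have hclamp : max 0 (min (t - T0) (T1 - T0)) = max 0 (min (T0 - T0) (T1 - T0)) := by omega
    simp only [Qmax, hclamp]
  · have hclamp : max 0 (min (t - T0) (T1 - T0)) = max 0 (min (T1 - T0) (T1 - T0)) := by omega
    simp only [Qmax, hclamp]

theorem Qmax_le_Qmax_sub_one (hy : Antitone y) (h0 : T0 < t) (h1 : t ≤ T1)
    (hij : (j : ℕ) = i + 1) : Qmax T0 T1 x y j t ≤ Qmax T0 T1 x y i (t - 1) := by
  refine (le_Qmax_iff ⟨by omega, by omega⟩).2 ⟨?_, fun l hl => ?_⟩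
  · exact Qmax_le_exit.trans (hy (Fin.le_def.2 (by omega)))
  · exact Qmax_le_entrance ⟨h0.le, h1⟩ (by omega)

theorem OmegaInter.apply_le_Qmax (hQ : Q ∈ OmegaInter T0 T1 x y f g) (i : Fin k)
    (ht : t ∈ Set.Icc T0 T1) : Q i t ≤ Qmax T0 T1 x y i t := by
  refine (le_Qmax_iff ht).2 ⟨?_, fun j hj => ?_⟩
  · exact hQ.2.2.1 i ▸ (hQ.1 i).monotone ht.2
  · obtain ⟨n, rfl⟩ := Int.le.dest ht.1
    exact hQ.2.1 j ▸ apply_add_le_apply hQ le_rfl ht.2 (by omega)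

theorem Qmax_mem_omegaInter (hT : T0 < T1)
    (hf : ∀ i : Fin k, (i : ℕ) = 0 → ∀ t ∈ Set.Ico T0 T1, ((y i : ℝ) : EReal) ≤ f t)
    (hQ : Q ∈ OmegaInter T0 T1 x y f g) : Qmax T0 T1 x y ∈ OmegaInter T0 T1 x y f g := by
  have hleft : T0 ∈ Set.Icc T0 T1 := Set.left_mem_Icc.2 hT.le
  have hright : T1 ∈ Set.Icc T0 T1 := Set.right_mem_Icc.2 hT.le
  refine ⟨incrPath_Qmax (OmegaInter.antitone_entrance hT hQ), fun i => ?_, fun i => ?_,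
    fun r h0 h1 => ⟨fun i hi => ?_, fun i j hij => ?_, fun i hi => ?_⟩⟩
  · exact (Qmax_le_entrance hleft (by omega)).antisymm
      (hQ.2.1 i ▸ OmegaInter.apply_le_Qmax hQ i hleft)
  · exact Qmax_le_exit.antisymm (hQ.2.2.1 i ▸ OmegaInter.apply_le_Qmax hQ i hright)
  · calc ((Qmax T0 T1 x y i r : ℝ) : EReal) ≤ ((y i : ℝ) : EReal) := mod_cast Qmax_le_exit
      _ ≤ f (r - 1) := hf i hi _ ⟨by omega, by omega⟩
  · exact Qmax_le_Qmax_sub_one (OmegaInter.antitone_exit hT hQ) h0 h1 hij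
  · calc g r ≤ ((Q i (r - 1) : ℝ) : EReal) := (hQ.2.2.2 r h0 h1).2.2 i hi
      _ ≤ ((Qmax T0 T1 x y i (r - 1) : ℝ) : EReal) :=
        mod_cast OmegaInter.apply_le_Qmax hQ i ⟨by omega, by omega⟩

end Configuration

theorem maximal_interlacing_configuration_general {k : ℕ} {T0 T1 : ℤ} (hT : T0 < T1)
    {x y : Fin k → ℤ} {f g : ℤ → EReal}
    (hf : ∀ i : Fin k, (i : ℕ) = 0 → ∀ t ∈ Set.Ico T0 T1, ((y i : ℝ) : EReal) ≤ f t)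
    (hne : (OmegaInter T0 T1 x y f g).Nonempty) :
    IsGreatest (OmegaInter T0 T1 x y f g) (Qmax T0 T1 x y) := by
  obtain ⟨P, hP⟩ := hne
  have hmem := Qmax_mem_omegaInter hT hf hP
  exact ⟨hmem, fun Q hQ i => (hQ.1 i).le_of_le_on_Icc hT.le (hmem.1 i)
    fun _ ht => OmegaInter.apply_le_Qmax hQ i ht⟩

/-- (Maximal interlacing configuration; Step 1 of the proof of Lemma 2.6.) -/
theorem maximal_interlacing_configuration
    (k : ℕ) (T0 T1 : ℤ) (hT : T0 < T1) (x y : Fin k → ℤ)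
    (hx : ∀ i j : Fin k, i ≤ j → x j ≤ x i) (hy : ∀ i j : Fin k, i ≤ j → y j ≤ y i)
    (g : ℤ → EReal) (hg : ∀ r : ℤ, T0 ≤ r → r ≤ T1 → g r ≠ ⊤)
    (hne : (OmegaInter T0 T1 x y (fun _ => (⊤ : EReal)) g).Nonempty) :
    Qmax T0 T1 x y ∈ OmegaInter T0 T1 x y (fun _ => (⊤ : EReal)) g ∧
      ∀ Q ∈ OmegaInter T0 T1 x y (fun _ => (⊤ : EReal)) g,
        ∀ (i : Fin k) (s : ℤ), T0 ≤ s → s ≤ T1 → Q i s ≤ Qmax T0 T1 x y i s := by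
  have hgreatest := maximal_interlacing_configuration_general hT (fun _ _ _ _ => le_top) hne
  exact ⟨hgreatest.1, fun Q hQ i s _ _ => hgreatest.2 hQ i s⟩
end
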